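/- arXiv:1610.05617 — 7 statements merged into one kernel-verified Lean document; each statement's English description precedes it below -/
import Mathlib

section
/- Let K ≥ 1 and let a₁,…,a_K ≥ 0 and b₁,…,b_K > 0 be fixed finite real constants. Then there exists a finite constant δ > 0 such that for every vector λ = (λ₁,…,λ_K) ∈ ℝ^K with λ_k ≥ 0 for all k and λ ≠ 0, one has (Σ_{k=1}^K a_k·λ_k) / (Σ_{k=1}^K b_k·λ_k)^{3/2} ≤ δ / √(‖λ‖₂), where ‖λ‖₂ = (Σ_{k=1}^K λ_k²)^{1/2} is the Euclidean norm. -/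
/-!
Put `N = ‖λ‖₂`. By Cauchy–Schwarz `∑ aₖ λₖ ≤ ‖a‖₂ N`. If `c > 0` is a lower bound for the `bₖ`, then
nonnegativity of `λ` gives `∑ bₖ λₖ ≥ c ‖λ‖₁ ≥ c N`. Hence the quotient with exponent `s` in the
denominator is at most `(‖a‖₂ / c ^ s) N ^ (1 - s)`.
-/

open Real Finset

section WeightedSums

variable {ι : Type*} {f : ι → ℝ}

theorem sqrt_sum_sq_le_sum {s : Finset ι} (hf : ∀ i ∈ s, 0 ≤ f i) :
    √(∑ i ∈ s, f i ^ 2) ≤ ∑ i ∈ s, f i :=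
  sqrt_le_iff.mpr ⟨sum_nonneg hf, sum_sq_le_sq_sum_of_nonneg hf⟩

theorem mul_sqrt_sum_sq_le_sum_mul {s : Finset ι} {b : ι → ℝ} {c : ℝ} (hc : 0 ≤ c)
    (hb : ∀ i ∈ s, c ≤ b i) (hf : ∀ i ∈ s, 0 ≤ f i) :
    c * √(∑ i ∈ s, f i ^ 2) ≤ ∑ i ∈ s, b i * f i :=
  calc
    c * √(∑ i ∈ s, f i ^ 2) ≤ c * ∑ i ∈ s, f i :=
      mul_le_mul_of_nonneg_left (sqrt_sum_sq_le_sum hf) hc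
    _ = ∑ i ∈ s, c * f i := mul_sum ..
    _ ≤ ∑ i ∈ s, b i * f i :=
      sum_le_sum fun i hi ↦ mul_le_mul_of_nonneg_right (hb i hi) (hf i hi)

theorem sqrt_sum_sq_pos [Fintype ι] (hf : f ≠ 0) : 0 < √(∑ i, f i ^ 2) := by
  obtain ⟨j, hj⟩ := Function.ne_iff.mp hf
  exact sqrt_pos.mpr <|
    sum_pos' (fun i _ ↦ sq_nonneg (f i)) ⟨j, mem_univ j, sq_pos_of_ne_zero hj⟩

end WeightedSums

theorem div_rpow_le_div_rpow_sub_one {A B C c N s : ℝ} (hC : 0 ≤ C) (hc : 0 < c) (hN : 0 < N)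
    (hs : 0 ≤ s) (hA : A ≤ C * N) (hB : c * N ≤ B) :
    A / B ^ s ≤ C / c ^ s / N ^ (s - 1) :=
  calc
    A / B ^ s ≤ C * N / (c * N) ^ s :=
      div_le_div₀ (by positivity) hA (by positivity) (rpow_le_rpow (by positivity) hB hs)
    _ = C / c ^ s / N ^ (s - 1) := by
      rw [mul_rpow hc.le hN.le, rpow_sub_one hN.ne']
      field_simp

theorem scaling_coefficient_bound_general {ι : Type*} [Fintype ι] (a : ι → ℝ) {b : ι → ℝ}
    (hb : ∀ k, 0 < b k) {s : ℝ} (hs : 0 ≤ s) :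
    ∃ δ : ℝ, 0 < δ ∧ ∀ lam : ι → ℝ, (∀ k, 0 ≤ lam k) → lam ≠ 0 →
      (∑ k, a k * lam k) / (∑ k, b k * lam k) ^ s ≤ δ / √(∑ k, lam k ^ 2) ^ (s - 1) := by
  obtain ⟨c, hc, hcb⟩ : ∃ c, 0 < c ∧ ∀ k, c < b k := by
    simpa using Pi.exists_forall_pos_add_lt hb
  -- The summand `1` keeps the constant positive when `a = 0`.
  refine ⟨(√(∑ k, a k ^ 2) + 1) / c ^ s, by positivity, fun lam hlam hne ↦ ?_⟩
  have numerator_le : ∑ k, a k * lam k ≤ (√(∑ k, a k ^ 2) + 1) * √(∑ k, lam k ^ 2) :=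
    (sum_mul_le_sqrt_mul_sqrt univ a lam).trans <| by gcongr; simp
  have le_denominator : c * √(∑ k, lam k ^ 2) ≤ ∑ k, b k * lam k :=
    mul_sqrt_sum_sq_le_sum_mul hc.le (fun k _ ↦ (hcb k).le) fun k _ ↦ hlam k
  exact div_rpow_le_div_rpow_sub_one (by positivity) hc (sqrt_sum_sq_pos hne) hs
    numerator_le le_denominator

/-- Lemma 1: the scaling coefficient `(∑ aₖ λₖ) / (∑ bₖ λₖ)^{3/2}` is bounded by
`δ / √‖λ‖₂` for some finite constant `δ > 0`, uniformly over nonzero nonnegative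
intensity vectors `λ`. -/
theorem scaling_coefficient_bound (K : ℕ) (hK : 1 ≤ K)
    (a b : Fin K → ℝ) (ha : ∀ k, 0 ≤ a k) (hb : ∀ k, 0 < b k) :
    ∃ δ : ℝ, 0 < δ ∧ ∀ lam : Fin K → ℝ, (∀ k, 0 ≤ lam k) → lam ≠ 0 →
      (∑ k, a k * lam k) / (∑ k, b k * lam k) ^ ((3 : ℝ) / 2)
        ≤ δ / Real.sqrt (Real.sqrt (∑ k, (lam k) ^ 2)) := by
  have exponent : (3 / 2 - 1 : ℝ) = 1 / 2 := by norm_num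
  simpa only [exponent, ← sqrt_eq_rpow] using
    scaling_coefficient_bound_general a hb (s := 3 / 2) (by norm_num)
end

section
/- Fix K ≥ 1. For each k ∈ {1,…,K} let H_k be a nonnegative random variable with finite third moment, and set m₂^{(k)} = E[H_k²] and m₃^{(k)} = E[H_k³], with m₂^{(k)} > 0. Let P_k > 0, a_k ≥ 0 and b_k > 0 be constants, and set c_k = P_k²·m₂^{(k)}. Then Ξ := (Σ_{k=1}^K a_k·P_k³·m₃^{(k)}) / (Σ_{k=1}^K b_k·c_k)^{3/2} ≥ (1/(‖c‖₂·‖b‖₂))^{3/2} · Σ_{k=1}^K a_k·c_k^{3/2}, where b = (b₁,…,b_K), c = (c₁,…,c_K) and ‖·‖₂ denotes the Euclidean norm on ℝ^K. -/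
open MeasureTheory
open scoped ProbabilityTheory

theorem pow_rpow_natCast_div {x : ℝ} (hx : 0 ≤ x) {m : ℕ} (hm : m ≠ 0) (n : ℕ) :
    (x ^ m) ^ ((n : ℝ) / m) = x ^ n := by
  rw [← Real.rpow_natCast_mul hx, mul_div_cancel₀ _ (Nat.cast_ne_zero.mpr hm), Real.rpow_natCast]

theorem one_div_sqrt_mul_sqrt_rpow_le {ι : Type*} (s : Finset ι) (f g : ι → ℝ) {r : ℝ}
    (hr : 0 ≤ r) (hfg : 0 < ∑ i ∈ s, f i * g i) :
    (1 / (√(∑ i ∈ s, f i ^ 2) * √(∑ i ∈ s, g i ^ 2))) ^ r ≤ 1 / (∑ i ∈ s, f i * g i) ^ r := by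
  calc (1 / (√(∑ i ∈ s, f i ^ 2) * √(∑ i ∈ s, g i ^ 2))) ^ r
      ≤ (1 / ∑ i ∈ s, f i * g i) ^ r := by
        gcongr
        exact Real.sum_mul_le_sqrt_mul_sqrt s f g
    _ = 1 / (∑ i ∈ s, f i * g i) ^ r := by rw [Real.div_rpow zero_le_one hfg.le, Real.one_rpow]

section Moments

variable {Ω : Type*} [MeasurableSpace Ω] {μ : Measure Ω} {X : Ω → ℝ} {m n : ℕ}

theorem integrable_pow_of_le [IsFiniteMeasure μ] (hX : AEStronglyMeasurable X μ) (hmn : m ≤ n)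
    (hint : Integrable (fun ω => X ω ^ n) μ) : Integrable (fun ω => X ω ^ m) μ := by
  have hnorm : Integrable (fun ω => ‖X ω‖ ^ n) μ := by simpa only [norm_pow] using hint.norm
  refine (integrable_norm_iff (hX.pow m)).mp ?_
  simpa only [Pi.pow_apply, norm_pow] using integrable_norm_pow_of_le hX hmn hnorm

variable [IsProbabilityMeasure μ]

theorem integral_pow_rpow_le_integral_pow (hX : AEStronglyMeasurable X μ) (hX0 : 0 ≤ᵐ[μ] X)
    (hm : m ≠ 0) (hmn : m ≤ n) (hint : Integrable (fun ω => X ω ^ n) μ) :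
    (∫ ω, X ω ^ m ∂μ) ^ ((n : ℝ) / m) ≤ ∫ ω, X ω ^ n ∂μ := by
  have hexp : 1 ≤ (n : ℝ) / m := by
    rw [one_le_div (by positivity)]
    exact_mod_cast hmn
  have hpow : (fun ω => (X ω ^ m) ^ ((n : ℝ) / m)) =ᵐ[μ] fun ω => X ω ^ n :=
    hX0.mono fun ω hω => pow_rpow_natCast_div hω hm n
  calc (∫ ω, X ω ^ m ∂μ) ^ ((n : ℝ) / m)
      ≤ ∫ ω, (X ω ^ m) ^ ((n : ℝ) / m) ∂μ :=
        (convexOn_rpow hexp).map_integral_le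
          (Real.continuous_rpow_const (zero_le_one.trans hexp)).continuousOn isClosed_Ici
          (hX0.mono fun ω hω => pow_nonneg hω m) (integrable_pow_of_le hX hmn hint)
          (hint.congr hpow.symm)
    _ = ∫ ω, X ω ^ n ∂μ := integral_congr_ae hpow

theorem pow_mul_integral_pow_rpow_le {t : ℝ} (ht : 0 ≤ t) (hX : AEStronglyMeasurable X μ)
    (hX0 : 0 ≤ᵐ[μ] X) (hm : m ≠ 0) (hmn : m ≤ n) (hint : Integrable (fun ω => X ω ^ n) μ) :
    (t ^ m * ∫ ω, X ω ^ m ∂μ) ^ ((n : ℝ) / m) ≤ t ^ n * ∫ ω, X ω ^ n ∂μ := by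
  simpa only [mul_pow, integral_const_mul] using
    integral_pow_rpow_le_integral_pow (X := fun ω => t * X ω) (hX.const_mul t)
      (hX0.mono fun ω hω => mul_nonneg ht hω) hm hmn
      (by simpa only [mul_pow] using hint.const_mul (t ^ n))

theorem scaling_coefficient_lower_bound_general {ι : Type*} [Fintype ι] {H : ι → Ω → ℝ}
    (hH : ∀ k, AEStronglyMeasurable (H k) μ) (hH0 : ∀ k, 0 ≤ᵐ[μ] H k) (hm : m ≠ 0) (hmn : m ≤ n)
    (hint : ∀ k, Integrable (fun ω => H k ω ^ n) μ) {P a b c : ι → ℝ}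
    (hP : ∀ k, 0 ≤ P k) (ha : ∀ k, 0 ≤ a k) (hc : ∀ k, c k = P k ^ m * ∫ ω, H k ω ^ m ∂μ)
    (hbc : 0 < ∑ k, b k * c k) :
    (1 / (√(∑ k, c k ^ 2) * √(∑ k, b k ^ 2))) ^ ((n : ℝ) / m) * ∑ k, a k * c k ^ ((n : ℝ) / m)
      ≤ (∑ k, a k * P k ^ n * ∫ ω, H k ω ^ n ∂μ) / (∑ k, b k * c k) ^ ((n : ℝ) / m) := by
  have hc0 (k : ι) : 0 ≤ c k := hc k ▸ mul_nonneg (pow_nonneg (hP k) m)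
    (integral_nonneg_of_ae <| (hH0 k).mono fun ω hω => pow_nonneg hω m)
  have hjensen (k : ι) : c k ^ ((n : ℝ) / m) ≤ P k ^ n * ∫ ω, H k ω ^ n ∂μ :=
    hc k ▸ pow_mul_integral_pow_rpow_le (hP k) (hH k) (hH0 k) hm hmn (hint k)
  have hcauchy : (1 / (√(∑ k, c k ^ 2) * √(∑ k, b k ^ 2))) ^ ((n : ℝ) / m)
      ≤ 1 / (∑ k, b k * c k) ^ ((n : ℝ) / m) := by
    rw [mul_comm √_]
    exact one_div_sqrt_mul_sqrt_rpow_le Finset.univ b c (by positivity) hbc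
  have hnum : ∑ k, a k * c k ^ ((n : ℝ) / m) ≤ ∑ k, a k * P k ^ n * ∫ ω, H k ω ^ n ∂μ := by
    simp only [mul_assoc]
    exact Finset.sum_le_sum fun k _ => mul_le_mul_of_nonneg_left (hjensen k) (ha k)
  have hsum : 0 ≤ ∑ k, a k * c k ^ ((n : ℝ) / m) :=
    Finset.sum_nonneg fun k _ => mul_nonneg (ha k) (Real.rpow_nonneg (hc0 k) _)
  calc _ ≤ 1 / (∑ k, b k * c k) ^ ((n : ℝ) / m) * ∑ k, a k * P k ^ n * ∫ ω, H k ω ^ n ∂μ :=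
        mul_le_mul hcauchy hnum hsum (by positivity)
    _ = _ := one_div_mul_eq_div _ _

end Moments

/-- Lemma 2: lower bound on the scaling coefficient `Ξ` in terms of the
fading moments, via Cauchy–Schwarz and Jensen's inequality. -/
theorem scaling_coefficient_lower_bound
    {Ω : Type*} [MeasureSpace Ω] [IsProbabilityMeasure (ℙ : Measure Ω)]
    (K : ℕ) (hK : 1 ≤ K) (H : Fin K → Ω → ℝ)
    (hHmeas : ∀ k, Measurable (H k))
    (hHnn : ∀ k ω, 0 ≤ H k ω)
    (hH3 : ∀ k, Integrable (fun ω => (H k ω) ^ 3))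
    (P a b m2 m3 c : Fin K → ℝ)
    (hP : ∀ k, 0 < P k) (ha : ∀ k, 0 ≤ a k) (hb : ∀ k, 0 < b k)
    (hm2 : ∀ k, m2 k = ∫ ω, (H k ω) ^ 2)
    (hm3 : ∀ k, m3 k = ∫ ω, (H k ω) ^ 3)
    (hm2pos : ∀ k, 0 < m2 k)
    (hc : ∀ k, c k = (P k) ^ 2 * m2 k) :
    (∑ k, a k * (P k) ^ 3 * m3 k) / (∑ k, b k * c k) ^ ((3 : ℝ) / 2)
      ≥ (1 / (Real.sqrt (∑ k, (c k) ^ 2) * Real.sqrt (∑ k, (b k) ^ 2))) ^ ((3 : ℝ) / 2)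
          * ∑ k, a k * (c k) ^ ((3 : ℝ) / 2) := by
  have : Nonempty (Fin K) := ⟨⟨0, hK⟩⟩
  have hbc : 0 < ∑ k, b k * c k := Finset.sum_pos (fun k _ => mul_pos (hb k)
    (hc k ▸ mul_pos (pow_pos (hP k) 2) (hm2pos k))) Finset.univ_nonempty
  simpa only [hm3, Nat.cast_ofNat] using scaling_coefficient_lower_bound_general (m := 2) (n := 3)
    (fun k => (hHmeas k).aestronglyMeasurable) (fun k => .of_forall (hHnn k)) two_ne_zero
    (Nat.le_succ 2) hH3 (fun k => (hP k).le) ha (fun k => hm2 k ▸ hc k) hbc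
end

section
/- Under the generic-association setup described in the context, suppose the Gaussian-approximation hypothesis holds: |P((I−μ)/σ ≤ x) − Ψ(x)| ≤ Ξ·c(x) for all x ∈ ℝ. Then for every τ > 0, the τ-outage probability satisfies 1 − E[V⁺(H,τ)] ≤ P(log(1 + SINR) < τ) ≤ 1 − E[V⁻(H,τ)]. -/
open MeasureTheory ProbabilityTheory
open scoped ProbabilityTheory

/-- The standard normal cumulative distribution function. -/
noncomputable def stdNormalCDF (x : ℝ) : ℝ :=
  (Real.sqrt (2 * Real.pi))⁻¹ * ∫ t in Set.Iic x, Real.exp (-(t ^ 2) / 2)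

/-- The Berry–Esseen multiplicative function `c(x) = min{0.4785, 31.935/(1+|x|³)}`. -/
noncomputable def berryC (x : ℝ) : ℝ := min 0.4785 (31.935 / (1 + |x| ^ 3))

/-!
Since log(1 + SINR) < τ exactly when the interference `I` exceeds the critical level `x(H)` at which
the link just meets its target, independence and Fubini give P(outage) = 1 - E[F_I(x(H))], where
`F_I` is the distribution function of `I`. An approximation of the standardised distribution
function brackets `F_I`, once truncated to [0, 1] and set to zero on the negative half-line, where
`F_I` vanishes because `I ≥ 0`; monotonicity of the integral then gives both bounds.
-/

theorem stdNormalCDF_mono : Monotone stdNormalCDF := by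
  have integrable_density : Integrable (fun t : ℝ => Real.exp (-(t ^ 2) / 2)) := by
    simpa only [neg_mul, one_div_mul_eq_div, neg_div] using
      integrable_exp_neg_mul_sq (b := 1 / 2) (by norm_num)
  intro x y hxy
  refine mul_le_mul_of_nonneg_left ?_ (by positivity)
  exact setIntegral_mono_set integrable_density.integrableOn
    (.of_forall fun t => (Real.exp_pos _).le) (.of_forall (Set.Iic_subset_Iic.2 hxy))

theorem measurable_berryC : Measurable berryC := by
  unfold berryC
  fun_prop

section CDF

variable {Ω : Type*} [MeasurableSpace Ω] {μ : Measure Ω} [IsProbabilityMeasure μ] {Y : Ω → ℝ}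

theorem cdf_map_eq_measureReal (hY : AEMeasurable Y μ) (x : ℝ) :
    cdf (μ.map Y) x = μ.real {ω | Y ω ≤ x} := by
  have := Measure.isProbabilityMeasure_map hY
  rw [cdf_eq_real, map_measureReal_apply_of_aemeasurable hY measurableSet_Iic]
  rfl

theorem cdf_map_eq_zero_of_neg (hY : AEMeasurable Y μ) (hY0 : 0 ≤ᵐ[μ] Y) {x : ℝ} (hx : x < 0) :
    cdf (μ.map Y) x = 0 := by
  rw [cdf_map_eq_measureReal hY, measureReal_eq_zero_iff, measure_eq_zero_iff_ae_notMem]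
  filter_upwards [hY0] with ω hω
  exact not_le.2 (hx.trans_le hω)

theorem measureReal_le_comp_eq_integral_cdf {β : Type*} [MeasurableSpace β] {X : Ω → β}
    (hX : AEMeasurable X μ) (hY : AEMeasurable Y μ) (hXY : IndepFun X Y μ)
    {t : β → ℝ} (ht : Measurable t) :
    μ.real {ω | Y ω ≤ t (X ω)} = ∫ ω, cdf (μ.map Y) (t (X ω)) ∂μ := by
  have := Measure.isProbabilityMeasure_map hY
  have hS : MeasurableSet {p : β × ℝ | p.2 ≤ t p.1} :=
    measurableSet_le measurable_snd (ht.comp measurable_fst)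
  have hcdf : Measurable fun x => cdf (μ.map Y) (t x) := (monotone_cdf _).measurable.comp ht
  have measure_eq_lintegral :
      μ {ω | Y ω ≤ t (X ω)} = ∫⁻ ω, ENNReal.ofReal (cdf (μ.map Y) (t (X ω))) ∂μ :=
    calc μ {ω | Y ω ≤ t (X ω)}
      _ = μ.map (fun ω => (X ω, Y ω)) {p | p.2 ≤ t p.1} :=
        (Measure.map_apply_of_aemeasurable (hX.prodMk hY) hS).symm
      _ = ∫⁻ x, μ.map Y (Set.Iic (t x)) ∂μ.map X := by
        rw [hXY.map_prod_eq_prod_map_map hX hY, Measure.prod_apply hS]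
        rfl
      _ = ∫⁻ x, ENNReal.ofReal (cdf (μ.map Y) (t x)) ∂μ.map X := by
        simp only [ofReal_cdf]
      _ = ∫⁻ ω, ENNReal.ofReal (cdf (μ.map Y) (t (X ω))) ∂μ :=
        lintegral_map' hcdf.ennreal_ofReal.aemeasurable hX
  rw [integral_eq_lintegral_of_nonneg_ae (.of_forall fun _ => cdf_nonneg _ _)
    (hcdf.comp_aemeasurable hX).aestronglyMeasurable, ← measure_eq_lintegral, measureReal_def]

end CDF

section Envelope

/-- The upper bound at `x` for the distribution function of a nonnegative random variable whose
standardisation with location `m` and scale `s` has distribution function within `ε` of `Φ`.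
Composed with `criticalInterference`, it is `V⁺`. -/
noncomputable def cdfUpperEnvelope (Φ ε : ℝ → ℝ) (m s x : ℝ) : ℝ :=
  if 0 ≤ x then min 1 (Φ ((x - m) / s) + ε ((x - m) / s)) else 0

/-- The lower bound matching `cdfUpperEnvelope`. Composed with `criticalInterference`, it is
`V⁻`. -/
noncomputable def cdfLowerEnvelope (Φ ε : ℝ → ℝ) (m s x : ℝ) : ℝ :=
  if 0 ≤ x then max 0 (Φ ((x - m) / s) - ε ((x - m) / s)) else 0

variable {Φ ε : ℝ → ℝ} {m s : ℝ}

theorem measurable_cdfUpperEnvelope (hΦ : Measurable Φ) (hε : Measurable ε) :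
    Measurable (cdfUpperEnvelope Φ ε m s) :=
  Measurable.ite measurableSet_Ici (by fun_prop) measurable_const

theorem measurable_cdfLowerEnvelope (hΦ : Measurable Φ) (hε : Measurable ε) :
    Measurable (cdfLowerEnvelope Φ ε m s) :=
  Measurable.ite measurableSet_Ici (by fun_prop) measurable_const

theorem cdfUpperEnvelope_le_one (x : ℝ) : cdfUpperEnvelope Φ ε m s x ≤ 1 := by
  unfold cdfUpperEnvelope
  split_ifs
  · exact min_le_left _ _
  · exact zero_le_one

theorem cdfLowerEnvelope_nonneg (x : ℝ) : 0 ≤ cdfLowerEnvelope Φ ε m s x := by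
  unfold cdfLowerEnvelope
  split_ifs
  · exact le_max_left _ _
  · exact le_rfl

variable {Ω : Type*} [MeasurableSpace Ω] {μ : Measure Ω} [IsProbabilityMeasure μ] {Y : Ω → ℝ}

theorem abs_cdf_map_sub_le (hY : AEMeasurable Y μ) (hs : 0 < s)
    (happrox : ∀ x, |μ.real {ω | (Y ω - m) / s ≤ x} - Φ x| ≤ ε x) (x : ℝ) :
    |cdf (μ.map Y) x - Φ ((x - m) / s)| ≤ ε ((x - m) / s) := by
  simpa only [cdf_map_eq_measureReal hY, div_le_div_iff_of_pos_right hs, sub_le_sub_iff_right]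
    using happrox ((x - m) / s)

theorem cdf_map_le_cdfUpperEnvelope (hY : AEMeasurable Y μ) (hY0 : 0 ≤ᵐ[μ] Y) (hs : 0 < s)
    (happrox : ∀ x, |μ.real {ω | (Y ω - m) / s ≤ x} - Φ x| ≤ ε x) (x : ℝ) :
    cdf (μ.map Y) x ≤ cdfUpperEnvelope Φ ε m s x := by
  unfold cdfUpperEnvelope
  split_ifs with hx
  · have := (abs_le.1 (abs_cdf_map_sub_le hY hs happrox x)).2
    exact le_min (cdf_le_one _ _) (by linarith)
  · exact (cdf_map_eq_zero_of_neg hY hY0 (not_le.1 hx)).le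

theorem cdfLowerEnvelope_le_cdf_map (hY : AEMeasurable Y μ) (hs : 0 < s)
    (happrox : ∀ x, |μ.real {ω | (Y ω - m) / s ≤ x} - Φ x| ≤ ε x) (x : ℝ) :
    cdfLowerEnvelope Φ ε m s x ≤ cdf (μ.map Y) x := by
  unfold cdfLowerEnvelope
  split_ifs
  · have := (abs_le.1 (abs_cdf_map_sub_le hY hs happrox x)).1
    exact max_le (cdf_nonneg _ _) (by linarith)
  · exact cdf_nonneg _ _

end Envelope

section Outage

/-- The signal-to-interference-plus-noise ratio with transmit power `P`, path gain `g`, noise power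
`N₀`, processing gain `PG`, fading coefficient `h` and aggregate interference `i`. -/
noncomputable def sinr (P g N₀ PG h i : ℝ) : ℝ := P * h * g / (N₀ + i / PG)

/-- The largest aggregate interference for which a link with fading coefficient `h` still meets
the target `τ ≤ log (1 + sinr)`; a negative value means that noise alone causes the outage. -/
noncomputable def criticalInterference (P g N₀ PG τ h : ℝ) : ℝ :=
  P * (h * g / (Real.exp τ - 1) - N₀ / P) * PG

variable {P g N₀ PG τ h i : ℝ}

theorem measurable_criticalInterference (P g N₀ PG τ : ℝ) :
    Measurable (criticalInterference P g N₀ PG τ) := by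
  unfold criticalInterference
  fun_prop

theorem log_one_add_sinr_lt_iff (hPhg : 0 ≤ P * h * g) (hpos : 0 < N₀ + i / PG) :
    Real.log (1 + sinr P g N₀ PG h i) < τ ↔ P * h * g < (Real.exp τ - 1) * (N₀ + i / PG) := by
  have : 0 ≤ sinr P g N₀ PG h i := div_nonneg hPhg hpos.le
  rw [Real.log_lt_iff_lt_exp (by linarith), ← lt_sub_iff_add_lt', sinr, div_lt_iff₀ hpos]

theorem criticalInterference_lt_iff (hP : P ≠ 0) (hPG : 0 < PG) (hτ : 0 < τ) :
    criticalInterference P g N₀ PG τ h < i ↔ P * h * g < (Real.exp τ - 1) * (N₀ + i / PG) := by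
  have hexp : 0 < Real.exp τ - 1 := sub_pos.2 (Real.one_lt_exp_iff.2 hτ)
  have hcrit : criticalInterference P g N₀ PG τ h =
      (P * h * g / (Real.exp τ - 1) - N₀) * PG := by
    unfold criticalInterference
    field_simp
  rw [hcrit, ← lt_div_iff₀ hPG, sub_lt_iff_lt_add', div_lt_iff₀' hexp]

theorem criticalInterference_nonneg_iff (hP : 0 < P) (hg : 0 < g) (hPG : 0 < PG) (hτ : 0 < τ) :
    0 ≤ criticalInterference P g N₀ PG τ h ↔ (Real.exp τ - 1) * N₀ / (P * g) ≤ h := by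
  rw [← not_lt, criticalInterference_lt_iff hP.ne' hPG hτ, not_lt, zero_div, add_zero,
    div_le_iff₀ (mul_pos hP hg), mul_right_comm, mul_comm (P * g)]

variable {Ω : Type*} [MeasurableSpace Ω] {μ : Measure Ω} [IsProbabilityMeasure μ] {H I : Ω → ℝ}

theorem measureReal_log_one_add_sinr_lt (hH : AEMeasurable H μ) (hI : AEMeasurable I μ)
    (hindep : IndepFun H I μ) (hH0 : 0 ≤ᵐ[μ] H) (hP : 0 < P) (hg : 0 ≤ g) (hPG : 0 < PG)
    (hpos : ∀ᵐ ω ∂μ, 0 < N₀ + I ω / PG) (hτ : 0 < τ) :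
    μ.real {ω | Real.log (1 + sinr P g N₀ PG (H ω) (I ω)) < τ} =
      1 - ∫ ω, cdf (μ.map I) (criticalInterference P g N₀ PG τ (H ω)) ∂μ := by
  have hcrit := (measurable_criticalInterference P g N₀ PG τ).comp_aemeasurable hH
  have outage_ae_eq : {ω | Real.log (1 + sinr P g N₀ PG (H ω) (I ω)) < τ} =ᵐ[μ]
      ({ω | I ω ≤ criticalInterference P g N₀ PG τ (H ω)}ᶜ : Set Ω) := by
    rw [Filter.eventuallyEq_set]
    filter_upwards [hpos, hH0] with ω hω hHω
    rw [Set.mem_compl_iff, Set.mem_ofPred_eq, not_le, criticalInterference_lt_iff hP.ne' hPG hτ,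
      log_one_add_sinr_lt_iff (mul_nonneg (mul_nonneg hP.le hHω) hg) hω]
  calc μ.real {ω | Real.log (1 + sinr P g N₀ PG (H ω) (I ω)) < τ}
    _ = μ.real {ω | I ω ≤ criticalInterference P g N₀ PG τ (H ω)}ᶜ := measureReal_congr outage_ae_eq
    _ = 1 - μ.real {ω | I ω ≤ criticalInterference P g N₀ PG τ (H ω)} :=
      probReal_compl_eq_one_sub₀ (nullMeasurableSet_le hI hcrit)
    _ = 1 - ∫ ω, cdf (μ.map I) (criticalInterference P g N₀ PG τ (H ω)) ∂μ := by
      rw [measureReal_le_comp_eq_integral_cdf hH hI hindep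
        (measurable_criticalInterference P g N₀ PG τ)]

theorem outage_probability_bounds_generic_general (hH : AEMeasurable H μ) (hI : AEMeasurable I μ)
    (hindep : IndepFun H I μ) (hH0 : 0 ≤ᵐ[μ] H) (hI0 : 0 ≤ᵐ[μ] I)
    {m s : ℝ} (hs : 0 < s) (hP : 0 < P) (hg : 0 ≤ g) (hPG : 0 < PG)
    (hpos : ∀ᵐ ω ∂μ, 0 < N₀ + I ω / PG)
    {Φ ε : ℝ → ℝ} (hΦ : Measurable Φ) (hε : Measurable ε)
    (happrox : ∀ x, |μ.real {ω | (I ω - m) / s ≤ x} - Φ x| ≤ ε x) (hτ : 0 < τ) :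
    1 - ∫ ω, cdfUpperEnvelope Φ ε m s (criticalInterference P g N₀ PG τ (H ω)) ∂μ ≤
        μ.real {ω | Real.log (1 + sinr P g N₀ PG (H ω) (I ω)) < τ} ∧
      μ.real {ω | Real.log (1 + sinr P g N₀ PG (H ω) (I ω)) < τ} ≤
        1 - ∫ ω, cdfLowerEnvelope Φ ε m s (criticalInterference P g N₀ PG τ (H ω)) ∂μ := by
  have integrable_comp {f : ℝ → ℝ} (hf : Measurable f) (hf01 : ∀ x, f x ∈ Set.Icc 0 1) :
      Integrable (fun ω => f (criticalInterference P g N₀ PG τ (H ω))) μ :=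
    .of_mem_Icc 0 1 ((hf.comp (measurable_criticalInterference P g N₀ PG τ)).comp_aemeasurable hH)
      (.of_forall fun _ => hf01 _)
  have lower_le := cdfLowerEnvelope_le_cdf_map hI hs happrox
  have le_upper := cdf_map_le_cdfUpperEnvelope hI hI0 hs happrox
  have integrable_cdf := integrable_comp (monotone_cdf (μ.map I)).measurable
    fun x => ⟨cdf_nonneg _ x, cdf_le_one _ x⟩
  have integrable_upper := integrable_comp (measurable_cdfUpperEnvelope hΦ hε)
    fun x => ⟨(cdf_nonneg _ x).trans (le_upper x), cdfUpperEnvelope_le_one x⟩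
  have integrable_lower := integrable_comp (measurable_cdfLowerEnvelope hΦ hε)
    fun x => ⟨cdfLowerEnvelope_nonneg x, (lower_le x).trans (cdf_le_one _ x)⟩
  rw [measureReal_log_one_add_sinr_lt hH hI hindep hH0 hP hg hPG hpos hτ]
  exact ⟨sub_le_sub_left (integral_mono integrable_cdf integrable_upper fun _ => le_upper _) 1,
    sub_le_sub_left (integral_mono integrable_lower integrable_cdf fun _ => lower_le _) 1⟩

end Outage

/-- Theorem 3: bounds on the τ-outage probability under the generic association
policy, assuming the Gaussian approximation bound for the interference `I`. -/
theorem outage_probability_bounds_generic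
    {Ω : Type*} [MeasureSpace Ω] [IsProbabilityMeasure (ℙ : Measure Ω)]
    (H I : Ω → ℝ) (hHmeas : Measurable H) (hImeas : Measurable I)
    (hindep : IndepFun H I ℙ)
    (hHnn : ∀ ω, 0 ≤ H ω) (hInn : ∀ ω, 0 ≤ I ω)
    (hI1 : Integrable I ℙ) (hI2 : Integrable (fun ω => (I ω) ^ 2) ℙ)
    (μ σ : ℝ) (hμ : μ = ∫ ω, I ω) (hσ : σ ^ 2 = ∫ ω, (I ω - μ) ^ 2) (hσpos : 0 < σ)
    (P g N₀ PG Ξ : ℝ) (hP : 0 < P) (hg : 0 < g) (hN₀ : 0 ≤ N₀) (hPG : 1 ≤ PG)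
    (hΞ : 0 ≤ Ξ)
    (hpos : ∀ᵐ ω ∂(ℙ : Measure Ω), 0 < N₀ + I ω / PG)
    (hGauss : ∀ x : ℝ,
      |(ℙ {ω | (I ω - μ) / σ ≤ x}).toReal - stdNormalCDF x| ≤ Ξ * berryC x)
    (τ : ℝ) (hτ : 0 < τ)
    (ζ Vp Vm : ℝ → ℝ)
    (hζ : ∀ h, ζ h = (P * (h * g / (Real.exp τ - 1) - N₀ / P) * PG - μ) / σ)
    (hVp : ∀ h, Vp h =
      if (Real.exp τ - 1) * N₀ / (P * g) ≤ h then
        min 1 (stdNormalCDF (ζ h) + Ξ * berryC (ζ h)) else 0)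
    (hVm : ∀ h, Vm h =
      if (Real.exp τ - 1) * N₀ / (P * g) ≤ h then
        max 0 (stdNormalCDF (ζ h) - Ξ * berryC (ζ h)) else 0) :
    1 - (∫ ω, Vp (H ω)) ≤
        (ℙ {ω | Real.log (1 + P * H ω * g / (N₀ + I ω / PG)) < τ}).toReal ∧
      (ℙ {ω | Real.log (1 + P * H ω * g / (N₀ + I ω / PG)) < τ}).toReal ≤
        1 - (∫ ω, Vm (H ω)) := by
  have hPG0 : 0 < PG := one_pos.trans_le hPG
  simp only [hVp, hVm, hζ, ← criticalInterference_nonneg_iff hP hg hPG0 hτ]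
  exact outage_probability_bounds_generic_general hHmeas.aemeasurable hImeas.aemeasurable hindep
    (.of_forall hHnn) (.of_forall hInn) hσpos hP hg.le hPG0 hpos stdNormalCDF_mono.measurable
    (measurable_berryC.const_mul Ξ) hGauss hτ
end

section
/- In the BARSS nearest-distance setup described in the context, fix k ∈ {1,…,K}. Then the tier-k association probability satisfies p_k* := P( β_i·P_i·G_i(R_i) ≤ β_k·P_k·G_k(R_k) for all i ≠ k ) = ∫₀^∞ ( ∏_{i≠k} exp(−m_i(Q_i^{(k)}(u))) )·f_{R_k}(u) du. -/
open MeasureTheory ProbabilityTheory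
open scoped ProbabilityTheory ENNReal

/-! The received-power comparison `c i * G i (R i) ≤ c k * G k (R k)` says, given `R k = u`, exactly
that `R i` is at least the tier-`i` distance `Q i u` giving the same biased power as a tier-`k`
station at distance `u`: this is the Galois property of the generalized inverse.  Conditioning on
`R k` and using independence, the association probability is the mean of the product of the
survival functions of the `R i` at `Q i (R k)`, and the law of `R k` has density `m' * exp (-m)`,
minus the derivative of its survival function. -/

section

open Set Filter Topology

section GeneralizedInverse

/-- The generalized inverse of a nonincreasing path-loss function on `[0, ∞)`, specified only at
positive values `y`, the ones taken by a received power. -/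
structure IsGeneralizedInverse (g ginv : ℝ → ℝ) : Prop where
  eq_sInf : ∀ y, 0 < y → y ≤ g 0 → ginv y = sInf {x | 0 ≤ x ∧ g x = y}
  eq_zero : ∀ y, g 0 < y → ginv y = 0

namespace IsGeneralizedInverse

variable {g ginv : ℝ → ℝ} {x y : ℝ}

lemma nonneg (h : IsGeneralizedInverse g ginv) (hy : 0 < y) : 0 ≤ ginv y := by
  rcases le_or_gt y (g 0) with hy0 | hy0
  · rw [h.eq_sInf y hy hy0]
    exact Real.sInf_nonneg fun _ hx => hx.1
  · rw [h.eq_zero y hy0]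

lemma le_of_apply_le (h : IsGeneralizedInverse g ginv) (hcont : ContinuousOn g (Ici 0))
    (hy : 0 < y) (hx : 0 ≤ x) (hxy : g x ≤ y) : ginv y ≤ x := by
  rcases le_or_gt y (g 0) with hy0 | hy0
  · obtain ⟨z, hz, hzy⟩ := intermediate_value_Icc' hx (hcont.mono Icc_subset_Ici_self) ⟨hxy, hy0⟩
    rw [h.eq_sInf y hy hy0]
    have hbdd : BddBelow {x | 0 ≤ x ∧ g x = y} := ⟨0, fun _ hw => hw.1⟩
    exact (csInf_le hbdd ⟨hz.1, hzy⟩).trans hz.2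
  · rwa [h.eq_zero y hy0]

lemma apply_le (h : IsGeneralizedInverse g ginv) (hcont : ContinuousOn g (Ici 0))
    (hlim : Tendsto g atTop (𝓝 0)) (hy : 0 < y) : g (ginv y) ≤ y := by
  rcases le_or_gt y (g 0) with hy0 | hy0
  · have hclosed : IsClosed {x | 0 ≤ x ∧ g x = y} :=
      hcont.preimage_isClosed_of_isClosed isClosed_Ici isClosed_singleton
    have hnonempty : {x | 0 ≤ x ∧ g x = y}.Nonempty := by
      obtain ⟨b, hby, hb⟩ := ((hlim.eventually_lt_const hy).and (eventually_ge_atTop 0)).exists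
      obtain ⟨z, hz, hzy⟩ :=
        intermediate_value_Icc' hb (hcont.mono Icc_subset_Ici_self) ⟨hby.le, hy0⟩
      exact ⟨z, hz.1, hzy⟩
    rw [h.eq_sInf y hy hy0]
    exact (hclosed.csInf_mem hnonempty ⟨0, fun _ hx => hx.1⟩).2.le
  · rw [h.eq_zero y hy0]
    exact hy0.le

theorem le_iff_apply_le (h : IsGeneralizedInverse g ginv) (hcont : ContinuousOn g (Ici 0))
    (hanti : AntitoneOn g (Ici 0)) (hlim : Tendsto g atTop (𝓝 0)) (hy : 0 < y) (hx : 0 ≤ x) :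
    ginv y ≤ x ↔ g x ≤ y :=
  ⟨fun hle => (hanti (h.nonneg hy) hx hle).trans (h.apply_le hcont hlim hy),
    h.le_of_apply_le hcont hy hx⟩

end IsGeneralizedInverse

end GeneralizedInverse

section SurvivalFunction

lemma antitone_measureReal_Ici {α : Type*} [Preorder α] [MeasurableSpace α] (μ : Measure α)
    [IsFiniteMeasure μ] : Antitone fun r => μ.real (Ici r) :=
  fun _ _ h => measureReal_mono (Ici_subset_Ici.2 h)

lemma tendsto_measureReal_Ici_atTop {α : Type*} [LinearOrder α] [Nonempty α] [NoMaxOrder α]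
    [TopologicalSpace α] [OrderClosedTopology α] [MeasurableSpace α] [OpensMeasurableSpace α]
    [(atTop : Filter α).IsCountablyGenerated] (μ : Measure α) [IsFiniteMeasure μ] :
    Tendsto (fun r => μ.real (Ici r)) atTop (𝓝 0) := by
  have hempty : ⋂ r : α, Ici r = ∅ := by
    simpa [eq_empty_iff_forall_notMem] using fun x : α => exists_gt x
  have h := tendsto_measure_iInter_atTop (μ := μ) (s := fun r : α => Ici r)
    (fun _ => nullMeasurableSet_Ici) antitone_Ici ⟨Classical.arbitrary α, measure_ne_top μ _⟩
  rw [hempty, measure_empty] at h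
  exact (ENNReal.tendsto_toReal ENNReal.zero_ne_top).comp h

variable {μ : Measure ℝ} [IsFiniteMeasure μ] {f : ℝ → ℝ} {a : ℝ}

lemma nonneg_of_hasDerivAt_measureReal_Ici {x : ℝ}
    (h : HasDerivAt (fun r => μ.real (Ici r)) (-f x) x) : 0 ≤ f x := by
  have hderiv := (antitone_measureReal_Ici μ).deriv_nonpos (x := x)
  rwa [h.deriv, neg_nonpos] at hderiv

lemma integrableOn_Ioi_of_hasDerivAt_measureReal_Ici
    (hcont : ContinuousWithinAt (fun r => μ.real (Ici r)) (Ici a) a)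
    (hderiv : ∀ x ∈ Ioi a, HasDerivAt (fun r => μ.real (Ici r)) (-f x) x) :
    IntegrableOn f (Ioi a) := by
  simpa using (integrableOn_Ioi_deriv_of_nonpos hcont hderiv
    (fun x hx => neg_nonpos.2 (nonneg_of_hasDerivAt_measureReal_Ici (hderiv x hx)))
    (tendsto_measureReal_Ici_atTop μ)).neg

lemma setLIntegral_Ioi_of_hasDerivAt_measureReal_Ici
    (hcont : ContinuousWithinAt (fun r => μ.real (Ici r)) (Ici a) a)
    (hderiv : ∀ x ∈ Ioi a, HasDerivAt (fun r => μ.real (Ici r)) (-f x) x) :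
    ∫⁻ x in Ioi a, ENNReal.ofReal (f x) = μ (Ici a) := by
  have hnonneg : ∀ x ∈ Ioi a, 0 ≤ f x :=
    fun x hx => nonneg_of_hasDerivAt_measureReal_Ici (hderiv x hx)
  have hint : ∫ x in Ioi a, f x = μ.real (Ici a) := by
    have h := integral_Ioi_of_hasDerivAt_of_nonpos hcont hderiv
      (fun x hx => neg_nonpos.2 (hnonneg x hx)) (tendsto_measureReal_Ici_atTop μ)
    rwa [integral_neg, zero_sub, neg_inj] at h
  rw [← ofReal_integral_eq_lintegral_ofReal
    (integrableOn_Ioi_of_hasDerivAt_measureReal_Ici hcont hderiv)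
    (ae_restrict_of_forall_mem measurableSet_Ioi hnonneg), hint, ofReal_measureReal]

theorem eq_withDensity_of_hasDerivAt_measureReal_Ici (hμ : ∀ᵐ x ∂μ, x ∈ Ici a)
    (hcont : ContinuousWithinAt (fun r => μ.real (Ici r)) (Ici a) a)
    (hderiv : ∀ x ∈ Ioi a, HasDerivAt (fun r => μ.real (Ici r)) (-f x) x) :
    μ = (volume.restrict (Ioi a)).withDensity fun x => ENNReal.ofReal (f x) := by
  have htail : ∀ b, a ≤ b → ∫⁻ x in Ici b, ENNReal.ofReal (f x) = μ (Ici b) := fun b hab => by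
    have hcontb : ContinuousWithinAt (fun r => μ.real (Ici r)) (Ici b) b := by
      rcases hab.eq_or_lt with rfl | hlt
      · exact hcont
      · exact (hderiv b hlt).continuousAt.continuousWithinAt
    rw [← setLIntegral_Ioi_of_hasDerivAt_measureReal_Ici hcontb
      fun x hx => hderiv x (hab.trans_lt hx), setLIntegral_congr Ioi_ae_eq_Ici]
  refine Measure.ext_of_Ici _ _ fun r => ?_
  rw [withDensity_apply _ measurableSet_Ici, restrict_Ioi_eq_restrict_Ici,
    Measure.restrict_restrict measurableSet_Ici, Ici_inter_Ici, htail _ le_sup_right,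
    ← Ici_inter_Ici, ← Measure.restrict_apply measurableSet_Ici,
    Measure.restrict_eq_self_of_ae_mem hμ]

theorem integral_eq_setIntegral_Ioi_of_hasDerivAt_measureReal_Ici (hμ : ∀ᵐ x ∂μ, x ∈ Ici a)
    (hcont : ContinuousWithinAt (fun r => μ.real (Ici r)) (Ici a) a)
    (hderiv : ∀ x ∈ Ioi a, HasDerivAt (fun r => μ.real (Ici r)) (-f x) x)
    {E : Type*} [NormedAddCommGroup E] [NormedSpace ℝ E] (φ : ℝ → E) :
    ∫ x, φ x ∂μ = ∫ x in Ioi a, f x • φ x := by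
  conv_lhs => rw [eq_withDensity_of_hasDerivAt_measureReal_Ici hμ hcont hderiv]
  rw [integral_withDensity_eq_integral_toReal_smul₀
    (integrableOn_Ioi_of_hasDerivAt_measureReal_Ici hcont hderiv).aemeasurable.ennreal_ofReal
    (by simp)]
  refine setIntegral_congr_fun measurableSet_Ioi fun x hx => ?_
  simp only [ENNReal.toReal_ofReal (nonneg_of_hasDerivAt_measureReal_Ici (hderiv x hx))]

end SurvivalFunction

section Independence

variable {Ω : Type*} [MeasurableSpace Ω] {μ : Measure Ω}

lemma measureReal_prodMk_mem_eq_integral_of_indepFun {α β : Type*} [MeasurableSpace α]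
    [MeasurableSpace β] [IsFiniteMeasure μ] {X : Ω → α} {Y : Ω → β} (hX : Measurable X)
    (hY : Measurable Y) (hXY : IndepFun X Y μ) {S : Set (α × β)} (hS : MeasurableSet S) :
    μ.real {ω | (X ω, Y ω) ∈ S} = ∫ x, μ.real {ω | (x, Y ω) ∈ S} ∂(μ.map X) := by
  have hsection : ∀ x, μ {ω | (x, Y ω) ∈ S} = μ.map Y (Prod.mk x ⁻¹' S) :=
    fun x => (Measure.map_apply hY (measurable_prodMk_left hS)).symm
  have hprod : μ {ω | (X ω, Y ω) ∈ S} = ∫⁻ x, μ.map Y (Prod.mk x ⁻¹' S) ∂(μ.map X) := by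
    rw [← Measure.prod_apply hS, ← (indepFun_iff_map_prod_eq_prod_map_map hX.aemeasurable
      hY.aemeasurable).1 hXY, Measure.map_apply (hX.prodMk hY) hS]
    rfl
  simp only [measureReal_def, hsection]
  rw [hprod, integral_toReal (measurable_measure_prodMk_left hS).aemeasurable
    (.of_forall fun _ => measure_lt_top _ _)]

theorem measureReal_forall_mem_eq_integral_prod_of_iIndepFun {ι : Type*} {E : ι → Type*}
    [∀ i, MeasurableSpace (E i)] {X : ∀ i, Ω → E i} (hX : ∀ i, Measurable (X i))
    (hindep : iIndepFun X μ) {k : ι} {T : Finset ι} (hk : k ∉ T) {S : ∀ i, Set (E k × E i)}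
    (hS : ∀ i ∈ T, MeasurableSet (S i)) :
    μ.real {ω | ∀ i ∈ T, (X k ω, X i ω) ∈ S i} =
      ∫ x, ∏ i ∈ T, μ.real {ω | (x, X i ω) ∈ S i} ∂(μ.map (X k)) := by
  have := hindep.isProbabilityMeasure
  let Y : Ω → ∀ i : T, E i := fun ω i => X i ω
  have hXY : IndepFun (X k) Y μ :=
    (hindep.indepFun_finset {k} T (Finset.disjoint_singleton_left.2 hk) hX).comp
      (measurable_pi_apply (⟨k, Finset.mem_singleton_self k⟩ : ({k} : Finset ι))) measurable_id
  have hmeas : MeasurableSet {p : E k × (∀ i : T, E i) | ∀ i : T, (p.1, p.2 i) ∈ S i} := by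
    simp only [ofPred_forall]
    exact .iInter fun i => (hS i i.2).preimage (by fun_prop)
  have hevent := measureReal_prodMk_mem_eq_integral_of_indepFun (hX k)
    (measurable_pi_lambda Y fun i => hX i) hXY hmeas
  simp only [mem_ofPred_eq, Subtype.forall, Y] at hevent
  rw [hevent]
  congr with x
  have hpreimage : {ω | ∀ i ∈ T, (x, X i ω) ∈ S i} = ⋂ i ∈ T, X i ⁻¹' (Prod.mk x ⁻¹' S i) := by
    ext ω
    simp
  rw [measureReal_def, hpreimage, hindep.measure_inter_preimage_eq_mul T
    fun i hi => measurable_prodMk_left (hS i hi), ENNReal.toReal_prod]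
  rfl

end Independence

section Association

lemma measurableSet_setOf_mul_le_mul {g h : ℝ → ℝ} (hg : ContinuousOn g (Ici 0))
    (hh : ContinuousOn h (Ici 0)) (c d : ℝ) :
    MeasurableSet {p : ℝ × ℝ | p ∈ Ici 0 ×ˢ Ici 0 ∧ c * g p.2 ≤ d * h p.1} :=
  ((isClosed_Ici.prod isClosed_Ici).isClosed_le
    ((hg.comp continuousOn_snd fun _ hp => hp.2).const_mul c)
    ((hh.comp continuousOn_fst fun _ hp => hp.1).const_mul d)).measurableSet

variable {Ω : Type*} [MeasurableSpace Ω] {μ : Measure Ω}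

theorem integral_map_eq_setIntegral_Ioi_of_measureReal_le_eq_exp [IsFiniteMeasure μ] {X : Ω → ℝ}
    (hX : Measurable X) {a : ℝ} (hXa : ∀ ω, a ≤ X ω) {m m' : ℝ → ℝ}
    (hsurv : ∀ r, a ≤ r → μ.real {ω | r ≤ X ω} = Real.exp (-m r))
    (hcont : ContinuousWithinAt m (Ici a) a) (hderiv : ∀ u, a < u → HasDerivAt m (m' u) u)
    {E : Type*} [NormedAddCommGroup E] [NormedSpace ℝ E] (φ : ℝ → E) :
    ∫ u, φ u ∂(μ.map X) = ∫ u in Ioi a, (m' u * Real.exp (-m u)) • φ u := by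
  have hIci : ∀ r ∈ Ici a, (μ.map X).real (Ici r) = Real.exp (-m r) := fun r hr => by
    rw [map_measureReal_apply hX measurableSet_Ici]
    exact hsurv r hr
  refine integral_eq_setIntegral_Ioi_of_hasDerivAt_measureReal_Ici
    ((ae_map_iff hX.aemeasurable measurableSet_Ici).2 (.of_forall hXa))
    (hcont.neg.rexp.congr hIci (hIci a self_mem_Ici)) (fun u hu => ?_) φ
  refine ((hderiv u hu).fun_neg.exp.congr_deriv (by ring)).congr_of_eventuallyEq ?_
  filter_upwards [Ioi_mem_nhds hu] with r hr using hIci r (mem_Ici_of_Ioi hr)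

theorem barss_association_probability_general
    {ι : Type*} [Fintype ι] [DecidableEq ι] {k : ι} {c : ι → ℝ} (hc : ∀ i, 0 < c i)
    {G Ginv : ι → ℝ → ℝ} (hGcont : ∀ i, ContinuousOn (G i) (Ici 0))
    (hGanti : ∀ i, AntitoneOn (G i) (Ici 0)) (hGpos : ∀ x, 0 ≤ x → 0 < G k x)
    (hGlim : ∀ i, Tendsto (G i) atTop (𝓝 0)) (hGinv : ∀ i, IsGeneralizedInverse (G i) (Ginv i))
    {R : ι → Ω → ℝ} (hRmeas : ∀ i, Measurable (R i)) (hRnn : ∀ i ω, 0 ≤ R i ω)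
    (hRindep : iIndepFun R μ) {m : ι → ℝ → ℝ}
    (hsurv : ∀ i r, 0 ≤ r → μ.real {ω | r ≤ R i ω} = Real.exp (-m i r)) {m' : ℝ → ℝ}
    (hmcont : ContinuousWithinAt (m k) (Ici 0) 0)
    (hmderiv : ∀ u, 0 < u → HasDerivAt (m k) (m' u) u) :
    μ.real {ω | ∀ i, i ≠ k → c i * G i (R i ω) ≤ c k * G k (R k ω)} =
      ∫ u in Ioi 0, (∏ i ∈ Finset.univ.erase k, Real.exp (-m i (Ginv i (c k / c i * G k u)))) *
        (m' u * Real.exp (-m k u)) := by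
  have := hRindep.isProbabilityMeasure
  let S : ι → Set (ℝ × ℝ) := fun i => {p ∈ Ici 0 ×ˢ Ici 0 | c i * G i p.2 ≤ c k * G k p.1}
  have hevent : {ω | ∀ i, i ≠ k → c i * G i (R i ω) ≤ c k * G k (R k ω)} =
      {ω | ∀ i ∈ Finset.univ.erase k, (R k ω, R i ω) ∈ S i} := by
    simp [S, hRnn]
  have hS : ∀ i ∈ Finset.univ.erase k, MeasurableSet (S i) :=
    fun i _ => measurableSet_setOf_mul_le_mul (hGcont i) (hGcont k) (c i) (c k)
  rw [hevent, measureReal_forall_mem_eq_integral_prod_of_iIndepFun hRmeas hRindep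
      (Finset.notMem_erase k _) hS,
    integral_map_eq_setIntegral_Ioi_of_measureReal_le_eq_exp (hRmeas k) (hRnn k) (hsurv k) hmcont
      hmderiv]
  refine setIntegral_congr_fun measurableSet_Ioi fun u hu => ?_
  have hprob : ∀ i, μ.real {ω | (u, R i ω) ∈ S i} =
      Real.exp (-m i (Ginv i (c k / c i * G k u))) := fun i => by
    have hy : 0 < c k / c i * G k u := mul_pos (div_pos (hc k) (hc i)) (hGpos u (le_of_lt hu))
    have hmem : ∀ ω, (u, R i ω) ∈ S i ↔ Ginv i (c k / c i * G k u) ≤ R i ω := fun ω => by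
      rw [(hGinv i).le_iff_apply_le (hGcont i) (hGanti i) (hGlim i) hy (hRnn i ω),
        div_mul_eq_mul_div, le_div_iff₀' (hc i)]
      simp [S, hRnn, le_of_lt (mem_Ioi.1 hu)]
    simp only [hmem, hsurv i _ ((hGinv i).nonneg hy)]
  simp only [hprob, smul_eq_mul, mul_comm (m' u * _)]

end Association

end

/-- Lemma 5: the tier-`k` association probability under the BARSS policy equals
`∫₀^∞ (∏_{i≠k} exp(−m_i(Q_i^{(k)}(u)))) f_{R_k}(u) du`, where `f_{R_k}(u) =
m_k'(u)·exp(−m_k(u))` is the nearest tier-`k` base-station distance density. -/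
theorem barss_association_probability
    {Ω : Type*} [MeasureSpace Ω] [IsProbabilityMeasure (ℙ : Measure Ω)]
    (K : ℕ) (hK : 2 ≤ K) (k : Fin K)
    (β P : Fin K → ℝ) (hβ : ∀ i, 0 < β i) (hP : ∀ i, 0 < P i)
    (G : Fin K → ℝ → ℝ)
    (hGcont : ∀ i, ContinuousOn (G i) (Set.Ici 0))
    (hGanti : ∀ i, ∀ x y : ℝ, 0 ≤ x → x ≤ y → G i y ≤ G i x)
    (hGpos : ∀ i, ∀ x : ℝ, 0 ≤ x → 0 < G i x)
    (hGlim : ∀ i, Filter.Tendsto (G i) Filter.atTop (nhds 0))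
    (Ginv : Fin K → ℝ → ℝ)
    (hGinv1 : ∀ i, ∀ y : ℝ, 0 < y → y ≤ G i 0 →
      Ginv i y = sInf {x : ℝ | 0 ≤ x ∧ G i x = y})
    (hGinv2 : ∀ i, ∀ y : ℝ, G i 0 < y → Ginv i y = 0)
    (Q : Fin K → ℝ → ℝ)
    (hQ : ∀ i u, Q i u = Ginv i (β k * P k / (β i * P i) * G k u))
    (R : Fin K → Ω → ℝ)
    (hRmeas : ∀ i, Measurable (R i)) (hRnn : ∀ i ω, 0 ≤ R i ω)
    (hRindep : iIndepFun R ℙ)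
    (m : Fin K → ℝ → ℝ)
    (hmcont : ∀ i, ContinuousOn (m i) (Set.Ici 0))
    (hmmono : ∀ i, ∀ x y : ℝ, 0 ≤ x → x ≤ y → m i x ≤ m i y)
    (hmnn : ∀ i, ∀ x : ℝ, 0 ≤ x → 0 ≤ m i x)
    (hm0 : ∀ i, m i 0 = 0)
    (hmtop : ∀ i, Filter.Tendsto (m i) Filter.atTop Filter.atTop)
    (hsurv : ∀ i, ∀ r : ℝ, 0 ≤ r →
      ℙ {ω | r ≤ R i ω} = ENNReal.ofReal (Real.exp (-(m i r))))
    (mk' : ℝ → ℝ) (hmk'cont : ContinuousOn mk' (Set.Ici 0))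
    (hmderiv : ∀ u : ℝ, 0 ≤ u → HasDerivAt (m k) (mk' u) u) :
    (ℙ {ω | ∀ i, i ≠ k →
        β i * P i * G i (R i ω) ≤ β k * P k * G k (R k ω)}).toReal =
      ∫ u in Set.Ioi (0 : ℝ),
        (∏ i ∈ Finset.univ.erase k, Real.exp (-(m i (Q i u)))) *
          (mk' u * Real.exp (-(m k u))) := by
  simp only [hQ]
  exact barss_association_probability_general (fun i => mul_pos (hβ i) (hP i)) hGcont
    (fun i x hx y _ hxy => hGanti i x y hx hxy) (hGpos k) hGlim
    (fun i => ⟨hGinv1 i, hGinv2 i⟩) hRmeas hRnn hRindep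
    (fun i r hr => by rw [measureReal_def, hsurv i r hr, ENNReal.toReal_ofReal (Real.exp_pos _).le])
    (hmcont k 0 Set.self_mem_Ici) fun u hu => hmderiv u hu.le
end

section
/- In the homogeneous BARSS nearest-distance setup described in the context, with each G_i additionally strictly decreasing, fix k and define a_i = (β_i·P_i/(β_k·P_k))·G_i(0) for i ∈ {1,…,K}\{k}, a_0 = 0 and a_{K+1} = +∞. Let π : {0,1,…,K} → ({1,…,K}\{k}) ∪ {0, K+1} be a bijection such that a_{π(0)} ≥ a_{π(1)} ≥ … ≥ a_{π(K)} (necessarily π(0) = K+1 and π(K) = 0), and set r_i = G_k^{-1}(a_{π(i)}) for i = 0,…,K (so r_0 = 0 and, since G_k is strictly positive, r_K = +∞, with the convention G_k^{-1}(0) = +∞). Then the tier-k association probability satisfies p_k* = 2π·λ_k · Σ_{j=1}^K ∫_{r_{j−1}}^{r_j} u·exp( −π·( λ_k·u² + Σ_{i=1}^{j−1} λ_{π(i)}·(Q_{π(i)}^{(k)}(u))² ) ) du. -/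
open MeasureTheory ProbabilityTheory
open scoped ProbabilityTheory ENNReal

/-!
Replace the generalized inverse of `G i` by its order-theoretic characterisation
`Ginv i y ≤ x ↔ G i x ≤ y`, which holds for every nonincreasing continuous path loss. It turns the
association event into `Q i (R k) ≤ R i` for all `i ≠ k`. Conditioning on `R k = u`, which has
density `2π λₖ u exp(-π λₖ u²)`, independence makes the conditional probability the product of the
survival probabilities `exp(-π λᵢ (Q i u)²)`, and so the association probability is one integral
over `[0, ∞)` involving all the tiers. On the `j`-th segment the tiers `σ i` with `j ≤ i` have
`Q (σ i) u = 0`, so truncating the sum in the exponent there changes nothing.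
-/

section GeneralizedInverse

/-- `h` is a generalized inverse on `(0, ∞)` of the nonincreasing function `g` on `[0, ∞)`: for
every level `y > 0`, `h y` is the least `x ≥ 0` with `g x ≤ y`. It is stated as an order adjunction,
the form in which path-loss inverses enter the association events. -/
structure IsGeneralizedInverse_s9 (g h : ℝ → ℝ) : Prop where
  nonneg : ∀ {y : ℝ}, 0 < y → 0 ≤ h y
  le_iff : ∀ {x y : ℝ}, 0 < y → 0 ≤ x → (h y ≤ x ↔ g x ≤ y)

variable {f finv g h : ℝ → ℝ} {c u v w x y : ℝ}

lemma isLeast_sInf_levelSet (hg : ContinuousOn g (Set.Ici 0))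
    (hne : {x : ℝ | 0 ≤ x ∧ g x = y}.Nonempty) :
    IsLeast {x : ℝ | 0 ≤ x ∧ g x = y} (sInf {x : ℝ | 0 ≤ x ∧ g x = y}) := by
  have hbdd : BddBelow {x : ℝ | 0 ≤ x ∧ g x = y} := ⟨0, fun _ hx => hx.1⟩
  have hclosed : IsClosed {x : ℝ | 0 ≤ x ∧ g x = y} :=
    hg.preimage_isClosed_of_isClosed isClosed_Ici (isClosed_singleton (x := y))
  exact ⟨hclosed.csInf_mem hne hbdd, fun _ hx => csInf_le hbdd hx⟩

theorem isGeneralizedInverse_of_eq_sInf (hg : ContinuousOn g (Set.Ici 0))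
    (hanti : AntitoneOn g (Set.Ici 0)) (hlim : Filter.Tendsto g Filter.atTop (nhds 0))
    (hinv : ∀ y, 0 < y → y ≤ g 0 → h y = sInf {x : ℝ | 0 ≤ x ∧ g x = y})
    (hzero : ∀ y, g 0 < y → h y = 0) : IsGeneralizedInverse_s9 g h := by
  have hlevel : ∀ {x y}, 0 ≤ x → y ≤ g 0 → g x ≤ y → ∃ z ≤ x, 0 ≤ z ∧ g z = y := by
    intro x y hx hy hxy
    obtain ⟨z, hz, hzy⟩ :=
      intermediate_value_Icc' hx (hg.mono Set.Icc_subset_Ici_self) ⟨hxy, hy⟩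
    exact ⟨z, hz.2, hz.1, hzy⟩
  have hleast : ∀ {y}, 0 < y → y ≤ g 0 → IsLeast {x : ℝ | 0 ≤ x ∧ g x = y} (h y) := by
    intro y hy hy0
    obtain ⟨b, hb, hby⟩ :=
      ((Filter.eventually_ge_atTop 0).and (hlim.eventually_le_const hy)).exists
    obtain ⟨z, -, hz⟩ := hlevel hb hy0 hby
    exact hinv y hy hy0 ▸ isLeast_sInf_levelSet hg ⟨z, hz⟩
  refine ⟨fun {y} hy => ?_, fun {x y} hy hx => ?_⟩ <;> rcases lt_or_ge (g 0) y with hy0 | hy0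
  · exact (hzero y hy0).ge
  · exact (hleast hy hy0).1.1
  · rw [hzero y hy0]
    exact iff_of_true hx ((hanti Set.self_mem_Ici hx hx).trans hy0.le)
  · obtain ⟨⟨hnonneg, hvalue⟩, hlower⟩ := hleast hy hy0
    refine ⟨fun hle => hvalue ▸ hanti hnonneg hx hle, fun hle => ?_⟩
    obtain ⟨z, hzx, hz⟩ := hlevel hx hy0 hle
    exact (hlower hz).trans hzx

namespace IsGeneralizedInverse_s9

lemma lt_iff (hgh : IsGeneralizedInverse_s9 g h) (hy : 0 < y) (hx : 0 ≤ x) : x < h y ↔ y < g x := by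
  rw [← not_le, hgh.le_iff hy hx, not_le]

lemma antitoneOn (hgh : IsGeneralizedInverse_s9 g h) : AntitoneOn h (Set.Ioi 0) := by
  intro y hy z hz hyz
  exact (hgh.le_iff hz (hgh.nonneg hy)).2 (((hgh.le_iff hy (hgh.nonneg hy)).1 le_rfl).trans hyz)

lemma eq_zero (hgh : IsGeneralizedInverse_s9 g h) (hy : 0 < y) (hle : g 0 ≤ y) : h y = 0 :=
  le_antisymm ((hgh.le_iff hy le_rfl).2 hle) (hgh.nonneg hy)

lemma div_mul_le_iff (hgh : IsGeneralizedInverse_s9 g h) (hv : 0 < v) (hw : 0 < w) (hy : 0 < y)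
    (hx : 0 ≤ x) : h (v / w * y) ≤ x ↔ w * g x ≤ v * y := by
  rw [hgh.le_iff (by positivity) hx, div_mul_eq_mul_div, le_div_iff₀ hw, mul_comm]

lemma eq_zero_of_lt (hgh : IsGeneralizedInverse_s9 g h) (hfinv : IsGeneralizedInverse_s9 f finv)
    (hc : 0 < c) (hg : 0 < g 0) (hu : 0 ≤ u) (hlt : u < finv (c⁻¹ * g 0)) : h (c * f u) = 0 := by
  have hfu : c⁻¹ * g 0 < f u := (hfinv.lt_iff (by positivity) hu).1 hlt
  have hfu_pos : 0 < f u := lt_trans (by positivity) hfu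
  exact hgh.eq_zero (by positivity) ((inv_mul_lt_iff₀ hc).1 hfu).le

lemma monotoneOn_comp_const_mul (hgh : IsGeneralizedInverse_s9 g h) (hc : 0 < c)
    (hf : AntitoneOn f (Set.Ici 0)) (hf0 : ∀ u, 0 ≤ u → 0 < f u) :
    MonotoneOn (fun u => h (c * f u)) (Set.Ici 0) := fun u hu v hv huv =>
  hgh.antitoneOn (mul_pos hc (hf0 v hv)) (mul_pos hc (hf0 u hu))
    (mul_le_mul_of_nonneg_left (hf hu hv huv) hc.le)

lemma monotoneOn_breakpoints (hgh : IsGeneralizedInverse_s9 g h) {n : ℕ} {b : Fin n → ℝ}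
    (hb : ∀ j, 0 < b j) (hanti : Antitone b) {r : ℕ → ℝ} (hr0 : r 0 = 0)
    (hr : ∀ j : Fin n, r (j + 1) = h (b j)) : MonotoneOn r (Set.Iic n) := by
  refine monotoneOn_of_le_succ Set.ordConnected_Iic fun j _ _ hj => ?_
  have hjn : j < n := hj
  rw [Order.succ_eq_add_one, hr ⟨j, hjn⟩]
  rcases j with _ | j
  · exact hr0 ▸ hgh.nonneg (hb _)
  · rw [hr ⟨j, by omega⟩]
    exact hgh.antitoneOn (hb _) (hb _) (hanti (Fin.mk_le_mk.2 j.le_succ))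

end IsGeneralizedInverse_s9

end GeneralizedInverse

section NearestDistance

/-- The density on `[0, ∞)` of the distance from the origin to the nearest point of a homogeneous
Poisson process of intensity `l` in the plane. -/
noncomputable def nearestDistPDF (l u : ℝ) : ℝ :=
  2 * Real.pi * l * u * Real.exp (-(Real.pi * l * u ^ 2))

variable {l : ℝ}

lemma nearestDistPDF_nonneg (hl : 0 ≤ l) {u : ℝ} (hu : 0 ≤ u) : 0 ≤ nearestDistPDF l u := by
  unfold nearestDistPDF
  positivity

lemma measurable_nearestDistPDF (l : ℝ) : Measurable (nearestDistPDF l) := by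
  unfold nearestDistPDF
  fun_prop

lemma hasDerivAt_neg_exp_neg_pi_mul_sq (l u : ℝ) :
    HasDerivAt (fun u : ℝ => -Real.exp (-(Real.pi * l * u ^ 2))) (nearestDistPDF l u) u := by
  refine ((((hasDerivAt_pow 2 u).const_mul (Real.pi * l)).neg).exp).neg.congr_deriv ?_
  simp only [Nat.cast_ofNat, Pi.neg_apply, nearestDistPDF]
  ring

lemma lintegral_Ici_nearestDistPDF (hl : 0 < l) {r : ℝ} (hr : 0 ≤ r) :
    ∫⁻ u in Set.Ici r, ENNReal.ofReal (nearestDistPDF l u) =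
      ENNReal.ofReal (Real.exp (-(Real.pi * l * r ^ 2))) := by
  have hlim : Filter.Tendsto (fun u : ℝ => -Real.exp (-(Real.pi * l * u ^ 2)))
      Filter.atTop (nhds 0) := by
    rw [← neg_zero]
    refine (Real.tendsto_exp_atBot.comp (Filter.tendsto_neg_atTop_atBot.comp ?_)).neg
    exact (Filter.tendsto_pow_atTop two_ne_zero).const_mul_atTop (by positivity)
  have hnonneg : ∀ u ∈ Set.Ioi r, 0 ≤ nearestDistPDF l u := fun u hu =>
    nearestDistPDF_nonneg hl.le (hr.trans (le_of_lt hu))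
  have hderiv : ∀ u ∈ Set.Ici r, HasDerivAt (fun u : ℝ => -Real.exp (-(Real.pi * l * u ^ 2)))
      (nearestDistPDF l u) u := fun u _ => hasDerivAt_neg_exp_neg_pi_mul_sq l u
  have hint := integrableOn_Ioi_deriv_of_nonneg' hderiv hnonneg hlim
  rw [setLIntegral_congr Ioi_ae_eq_Ici.symm, ← ofReal_integral_eq_lintegral_ofReal hint
    (ae_restrict_of_forall_mem measurableSet_Ioi hnonneg),
    integral_Ioi_of_hasDerivAt_of_tendsto' hderiv hint hlim, zero_sub, neg_neg]

theorem map_eq_withDensity_nearestDistPDF {Ω : Type*} [MeasurableSpace Ω] {μ : Measure Ω}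
    [IsFiniteMeasure μ] {X : Ω → ℝ} (hX : Measurable X) (hnonneg : ∀ ω, 0 ≤ X ω) (hl : 0 < l)
    (hsurv : ∀ r, 0 ≤ r →
      μ {ω | r ≤ X ω} = ENNReal.ofReal (Real.exp (-(Real.pi * l * r ^ 2)))) :
    μ.map X = (volume.restrict (Set.Ici 0)).withDensity
      fun u => ENNReal.ofReal (nearestDistPDF l u) := by
  refine Measure.ext_of_Ici _ _ fun a => ?_
  have hpre : X ⁻¹' Set.Ici a = {ω | a ⊔ 0 ≤ X ω} := by
    ext ω
    simp [hnonneg ω]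
  rw [Measure.map_apply hX measurableSet_Ici, withDensity_apply _ measurableSet_Ici,
    Measure.restrict_restrict measurableSet_Ici, Set.Ici_inter_Ici,
    lintegral_Ici_nearestDistPDF hl le_sup_right, hpre, hsurv _ le_sup_right]

end NearestDistance

section Conditioning

variable {Ω : Type*} [MeasurableSpace Ω] {μ : Measure Ω}

lemma measure_prodMk_mem_eq_lintegral_of_indepFun [IsFiniteMeasure μ]
    {E F : Type*} [MeasurableSpace E] [MeasurableSpace F]
    {X : Ω → E} {Y : Ω → F} (hX : Measurable X) (hY : Measurable Y) (hXY : IndepFun X Y μ)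
    {S : Set (E × F)} (hS : MeasurableSet S) :
    μ {ω | (X ω, Y ω) ∈ S} = ∫⁻ x, μ {ω | (x, Y ω) ∈ S} ∂μ.map X := by
  have hlaw := (indepFun_iff_map_prod_eq_prod_map_map hX.aemeasurable hY.aemeasurable).1 hXY
  calc μ {ω | (X ω, Y ω) ∈ S} = ((μ.map X).prod (μ.map Y)) S := by
        rw [← hlaw, Measure.map_apply (hX.prodMk hY) hS]; rfl
    _ = ∫⁻ x, μ {ω | (x, Y ω) ∈ S} ∂μ.map X := by
        rw [Measure.prod_apply hS]
        exact lintegral_congr fun x => Measure.map_apply hY (measurable_prodMk_left hS)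

theorem measure_forall_prodMk_mem_eq_lintegral_prod {ι : Type*} {E : ι → Type*}
    [∀ i, MeasurableSpace (E i)] {R : ∀ i, Ω → E i} (hR : ∀ i, Measurable (R i))
    (hindep : iIndepFun R μ) {k : ι} {T : Finset ι} (hk : k ∉ T)
    {S : ∀ i, Set (E k × E i)} (hS : ∀ i, MeasurableSet (S i)) :
    μ {ω | ∀ i ∈ T, (R k ω, R i ω) ∈ S i} =
      ∫⁻ u, ∏ i ∈ T, μ {ω | (u, R i ω) ∈ S i} ∂μ.map (R k) := by
  have := hindep.isProbabilityMeasure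
  have hRT : Measurable fun ω (i : T) => R i ω := measurable_pi_lambda _ fun i => hR i
  have hkT : IndepFun (R k) (fun ω (i : T) => R i ω) μ :=
    (hindep.indepFun_finset {k} T (Finset.disjoint_singleton_left.2 hk) hR).comp
      (φ := fun v : (∀ i : ({k} : Finset ι), E i) => v ⟨k, Finset.mem_singleton_self k⟩)
      (measurable_pi_apply _) measurable_id
  have hST : MeasurableSet {p : E k × (∀ i : T, E i) | ∀ i : T, (p.1, p.2 i) ∈ S i} := by
    rw [Set.ofPred_forall]
    exact .iInter fun i => measurableSet_preimage
      (measurable_fst.prodMk ((measurable_pi_apply i).comp measurable_snd)) (hS i)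
  have hslice : ∀ u, μ {ω | ∀ i ∈ T, (u, R i ω) ∈ S i} = ∏ i ∈ T, μ {ω | (u, R i ω) ∈ S i} := by
    intro u
    have hinter : {ω | ∀ i ∈ T, (u, R i ω) ∈ S i} = ⋂ i ∈ T, R i ⁻¹' (Prod.mk u ⁻¹' S i) := by
      ext ω
      simp
    rw [hinter]
    exact hindep.measure_inter_preimage_eq_mul T fun i _ => measurable_prodMk_left (hS i)
  simpa only [Set.mem_ofPred_eq, Subtype.forall, hslice] using
    measure_prodMk_mem_eq_lintegral_of_indepFun (hR k) hRT hkT hST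

end Conditioning

section AssociationProbability

variable {ι : Type*} {lam : ι → ℝ} {Q : ι → ℝ → ℝ} {k : ι} {T : Finset ι}

lemma prod_ofReal_exp_neg_pi_mul_sq (T : Finset ι) (lam q : ι → ℝ) :
    ∏ i ∈ T, ENNReal.ofReal (Real.exp (-(Real.pi * lam i * q i ^ 2))) =
      ENNReal.ofReal (Real.exp (-(Real.pi * ∑ i ∈ T, lam i * q i ^ 2))) := by
  rw [← ENNReal.ofReal_prod_of_nonneg fun _ _ => (Real.exp_pos _).le, ← Real.exp_sum,
    Finset.sum_neg_distrib, Finset.mul_sum]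
  simp only [mul_assoc]

lemma nearestDistPDF_mul_exp (l s u : ℝ) :
    nearestDistPDF l u * Real.exp (-(Real.pi * s)) =
      2 * Real.pi * l * (u * Real.exp (-(Real.pi * (l * u ^ 2 + s)))) := by
  rw [nearestDistPDF, mul_add, neg_add, Real.exp_add]
  ring_nf

lemma aemeasurable_sum_mul_sq (hQ : ∀ i, MonotoneOn (Q i) (Set.Ici 0)) (lam : ι → ℝ)
    (T : Finset ι) :
    AEMeasurable (fun u => ∑ i ∈ T, lam i * Q i u ^ 2) (volume.restrict (Set.Ici 0)) := by
  have hQ' := fun i => aemeasurable_restrict_of_monotoneOn (μ := volume) measurableSet_Ici (hQ i)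
  fun_prop

variable {Ω : Type*} [MeasurableSpace Ω] {μ : Measure Ω} {R : ι → Ω → ℝ}

lemma measure_forall_le_eq_lintegral (hQ : ∀ i, MonotoneOn (Q i) (Set.Ici 0))
    (hQ0 : ∀ i, ∀ u, 0 ≤ u → 0 ≤ Q i u) (hR : ∀ i, Measurable (R i))
    (hR0 : ∀ ω, 0 ≤ R k ω) (hindep : iIndepFun R μ) (hl : 0 < lam k)
    (hsurv : ∀ i, ∀ r, 0 ≤ r →
      μ {ω | r ≤ R i ω} = ENNReal.ofReal (Real.exp (-(Real.pi * lam i * r ^ 2))))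
    (hk : k ∉ T) :
    μ {ω | ∀ i ∈ T, Q i (R k ω) ≤ R i ω} =
      ∫⁻ u in Set.Ici 0, ENNReal.ofReal (2 * Real.pi * lam k *
        (u * Real.exp (-(Real.pi * (lam k * u ^ 2 + ∑ i ∈ T, lam i * Q i u ^ 2))))) := by
  have := hindep.isProbabilityMeasure
  -- `Q i` is controlled on `[0, ∞)` only; extending it by `Q i 0` makes it measurable on `ℝ`.
  have hQmeas : ∀ i, Measurable fun u => Q i (max u 0) := fun i =>
    Monotone.measurable fun u v huv =>
      hQ i (le_max_right u 0) (le_max_right v 0) (max_le_max_right 0 huv)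
  have hS : ∀ i, MeasurableSet {p : ℝ × ℝ | Q i (max p.1 0) ≤ p.2} := fun i =>
    measurableSet_le ((hQmeas i).comp measurable_fst) measurable_snd
  have hslice : ∀ u, ∏ i ∈ T, μ {ω | Q i (max u 0) ≤ R i ω} =
      ENNReal.ofReal (Real.exp (-(Real.pi * ∑ i ∈ T, lam i * Q i (max u 0) ^ 2))) := by
    intro u
    rw [← prod_ofReal_exp_neg_pi_mul_sq]
    exact Finset.prod_congr rfl fun i _ => hsurv i _ (hQ0 i _ (le_max_right u 0))
  have hmeas : Measurable fun u => ENNReal.ofReal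
      (Real.exp (-(Real.pi * ∑ i ∈ T, lam i * Q i (max u 0) ^ 2))) := by
    have := fun i (_ : i ∈ T) => ((hQmeas i).pow_const 2).const_mul (lam i)
    fun_prop
  have hcond := measure_forall_prodMk_mem_eq_lintegral_prod hR hindep hk hS
  simp only [Set.mem_ofPred_eq, max_eq_left (hR0 _), hslice] at hcond
  rw [hcond, map_eq_withDensity_nearestDistPDF (hR k) hR0 hl (hsurv k),
    lintegral_withDensity_eq_lintegral_mul _
      (measurable_nearestDistPDF _).ennreal_ofReal hmeas]
  refine setLIntegral_congr_fun measurableSet_Ici fun u (hu : 0 ≤ u) => ?_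
  rw [Pi.mul_apply, ← ENNReal.ofReal_mul (nearestDistPDF_nonneg hl.le hu), nearestDistPDF_mul_exp,
    max_eq_left hu]

theorem toReal_measure_forall_le_eq_integral (hQ : ∀ i, MonotoneOn (Q i) (Set.Ici 0))
    (hQ0 : ∀ i, ∀ u, 0 ≤ u → 0 ≤ Q i u) (hR : ∀ i, Measurable (R i))
    (hR0 : ∀ ω, 0 ≤ R k ω) (hindep : iIndepFun R μ) (hl : 0 < lam k)
    (hsurv : ∀ i, ∀ r, 0 ≤ r →
      μ {ω | r ≤ R i ω} = ENNReal.ofReal (Real.exp (-(Real.pi * lam i * r ^ 2))))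
    (hk : k ∉ T) :
    (μ {ω | ∀ i ∈ T, Q i (R k ω) ≤ R i ω}).toReal =
      2 * Real.pi * lam k * ∫ u in Set.Ici 0,
        u * Real.exp (-(Real.pi * (lam k * u ^ 2 + ∑ i ∈ T, lam i * Q i u ^ 2))) := by
  have hsum := aemeasurable_sum_mul_sq hQ lam T
  rw [measure_forall_le_eq_lintegral hQ hQ0 hR hR0 hindep hl hsurv hk, ← integral_const_mul,
    integral_eq_lintegral_of_nonneg_ae]
  · refine ae_restrict_of_forall_mem measurableSet_Ici fun u (hu : 0 ≤ u) => ?_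
    rw [Pi.zero_apply]
    positivity
  · exact AEMeasurable.aestronglyMeasurable (by fun_prop)

theorem toReal_measure_association_eq_integral [Fintype ι] [DecidableEq ι] {w : ι → ℝ}
    (hw : ∀ i, 0 < w i) {G Ginv : ι → ℝ → ℝ} (hinv : ∀ i, IsGeneralizedInverse_s9 (G i) (Ginv i))
    (hanti : AntitoneOn (G k) (Set.Ici 0)) (hpos : ∀ u, 0 ≤ u → 0 < G k u)
    (hR : ∀ i, Measurable (R i)) (hR0 : ∀ i ω, 0 ≤ R i ω) (hindep : iIndepFun R μ)
    (hl : 0 < lam k)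
    (hsurv : ∀ i, ∀ r, 0 ≤ r →
      μ {ω | r ≤ R i ω} = ENNReal.ofReal (Real.exp (-(Real.pi * lam i * r ^ 2)))) :
    (μ {ω | ∀ i, i ≠ k → w i * G i (R i ω) ≤ w k * G k (R k ω)}).toReal =
      2 * Real.pi * lam k * ∫ u in Set.Ici 0, u * Real.exp (-(Real.pi * (lam k * u ^ 2 +
        ∑ i ∈ Finset.univ.erase k, lam i * Ginv i (w k / w i * G k u) ^ 2))) := by
  have hc : ∀ i, 0 < w k / w i := fun i => div_pos (hw k) (hw i)
  rw [← toReal_measure_forall_le_eq_integral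
    (fun i => (hinv i).monotoneOn_comp_const_mul (hc i) hanti hpos)
    (fun i u hu => (hinv i).nonneg (mul_pos (hc i) (hpos u hu))) hR (hR0 k) hindep hl hsurv
    (Finset.notMem_erase k _)]
  congr 2
  ext ω
  simp [(hinv _).div_mul_le_iff (hw k) (hw _) (hpos _ (hR0 k ω)) (hR0 _ ω)]

end AssociationProbability

section Segments

lemma integrableOn_Ici_mul_exp_neg {c l : ℝ} (hc : 0 < c) (hl : 0 < l) {s : ℝ → ℝ}
    (hs : AEMeasurable s (volume.restrict (Set.Ici 0))) (hs0 : ∀ u, 0 ≤ u → 0 ≤ s u) :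
    IntegrableOn (fun u => u * Real.exp (-(c * (l * u ^ 2 + s u)))) (Set.Ici 0) := by
  refine Integrable.mono' (integrable_mul_exp_neg_mul_sq (mul_pos hc hl)).integrableOn
    (AEMeasurable.aestronglyMeasurable (by fun_prop))
    (ae_restrict_of_forall_mem measurableSet_Ici fun u (hu : 0 ≤ u) => ?_)
  rw [Real.norm_of_nonneg (by positivity)]
  gcongr
  linarith [mul_nonneg hc.le (hs0 u hu)]

theorem sum_setIntegral_Ico_add_setIntegral_Ici {E : Type*} [NormedAddCommGroup E]
    [NormedSpace ℝ E] {μ : Measure ℝ} {f : ℝ → E} {r : ℕ → ℝ} {n : ℕ}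
    (hr : MonotoneOn r (Set.Iic n)) (hf : IntegrableOn f (Set.Ici (r 0)) μ) :
    (∑ j ∈ Finset.range n, ∫ u in Set.Ico (r j) (r (j + 1)), f u ∂μ) +
      ∫ u in Set.Ici (r n), f u ∂μ = ∫ u in Set.Ici (r 0), f u ∂μ := by
  induction n with
  | zero => simp
  | succ n ih =>
    have hstart : r 0 ≤ r n := hr (Nat.zero_le _) n.le_succ n.zero_le
    have hstep : r n ≤ r (n + 1) := hr n.le_succ Set.self_mem_Iic n.le_succ
    have hdisj : Disjoint (Set.Ico (r n) (r (n + 1))) (Set.Ici (r (n + 1))) :=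
      (Set.Iio_disjoint_Ici le_rfl).mono_left Set.Ico_subset_Iio_self
    have hfn : IntegrableOn f (Set.Ici (r n)) μ := hf.mono_set (Set.Ici_subset_Ici.2 hstart)
    rw [← ih (hr.mono (Set.Iic_subset_Iic.2 n.le_succ)), Finset.sum_range_succ, add_assoc,
      ← setIntegral_union hdisj measurableSet_Ici (hfn.mono_set Set.Ico_subset_Ici_self)
        (hfn.mono_set (Set.Ici_subset_Ici.2 hstep)),
      Set.Ico_union_Ici_eq_Ici hstep]

lemma sum_filter_lt_eq_sum_of_mem_Ico {M : Type*} [AddCommMonoid M] {r : ℕ → ℝ} {n j : ℕ}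
    (hr : MonotoneOn r (Set.Iic n)) (hj : j ≤ n) {f : Fin n → ℝ → M}
    (hf : ∀ (i : Fin n) (u : ℝ), r 0 ≤ u → u < r (i + 1) → f i u = 0) {u : ℝ}
    (hu : u ∈ Set.Ico (r j) (r (j + 1))) :
    ∑ i ∈ Finset.univ.filter (fun i : Fin n => (i : ℕ) < j), f i u = ∑ i, f i u := by
  refine Finset.sum_filter_of_ne fun i _ hne => ?_
  contrapose! hne
  have hi : (i : ℕ) + 1 ≤ n := i.2
  exact hf i u ((hr n.zero_le hj j.zero_le).trans hu.1)
    (hu.2.trans_le (hr (show j + 1 ≤ n by omega) hi (by omega)))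

end Segments

lemma image_univ_eq_univ_erase {ι κ : Type*} [Fintype ι] [Fintype κ] [DecidableEq ι]
    {σ : κ → ι} (hσ : Function.Injective σ) {k : ι} (hk : ∀ j, σ j ≠ k)
    (hcard : Fintype.card κ = Fintype.card ι - 1) :
    Finset.univ.image σ = Finset.univ.erase k := by
  refine Finset.eq_of_subset_of_card_le (fun i hi => ?_) ?_
  · obtain ⟨j, -, rfl⟩ := Finset.mem_image.1 hi
    exact Finset.mem_erase.2 ⟨hk j, Finset.mem_univ _⟩
  · rw [Finset.card_image_of_injective _ hσ, Finset.card_erase_of_mem (Finset.mem_univ k),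
      Finset.card_univ, Finset.card_univ, hcard]

theorem barss_association_probability_enumerated_general
    {Ω : Type*} [MeasurableSpace Ω] {μ : Measure Ω}
    (K : ℕ) (k : Fin K)
    (β P lam : Fin K → ℝ)
    (hβ : ∀ i, 0 < β i) (hP : ∀ i, 0 < P i) (hlam : ∀ i, 0 < lam i)
    (G : Fin K → ℝ → ℝ)
    (hGcont : ∀ i, ContinuousOn (G i) (Set.Ici 0))
    (hGanti : ∀ i, ∀ x y : ℝ, 0 ≤ x → x ≤ y → G i y ≤ G i x)
    (hGpos : ∀ i, ∀ x : ℝ, 0 ≤ x → 0 < G i x)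
    (hGlim : ∀ i, Filter.Tendsto (G i) Filter.atTop (nhds 0))
    (Ginv : Fin K → ℝ → ℝ)
    (hGinv1 : ∀ i, ∀ y : ℝ, 0 < y → y ≤ G i 0 →
      Ginv i y = sInf {x : ℝ | 0 ≤ x ∧ G i x = y})
    (hGinv2 : ∀ i, ∀ y : ℝ, G i 0 < y → Ginv i y = 0)
    (Q : Fin K → ℝ → ℝ)
    (hQ : ∀ i u, Q i u = Ginv i (β k * P k / (β i * P i) * G k u))
    (R : Fin K → Ω → ℝ)
    (hRmeas : ∀ i, Measurable (R i)) (hRnn : ∀ i ω, 0 ≤ R i ω)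
    (hRindep : iIndepFun R μ)
    (hsurv : ∀ i, ∀ r : ℝ, 0 ≤ r →
      μ {ω | r ≤ R i ω} = ENNReal.ofReal (Real.exp (-(Real.pi * lam i * r ^ 2))))
    (a : Fin K → ℝ) (ha : ∀ i, a i = β i * P i / (β k * P k) * G i 0)
    (σ : Fin (K - 1) → Fin K)
    (hσinj : Function.Injective σ) (hσk : ∀ j, σ j ≠ k)
    (hσdesc : ∀ i j : Fin (K - 1), i ≤ j → a (σ j) ≤ a (σ i))
    (r : ℕ → ℝ) (hr0 : r 0 = 0)
    (hrsucc : ∀ j : Fin (K - 1), r ((j : ℕ) + 1) = Ginv k (a (σ j)))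
    (F : ℕ → ℝ → ℝ)
    (hF : ∀ (j : ℕ) (u : ℝ), F j u =
      u * Real.exp (-(Real.pi * (lam k * u ^ 2 +
        ∑ i ∈ Finset.univ.filter (fun i : Fin (K - 1) => (i : ℕ) < j),
          lam (σ i) * (Q (σ i) u) ^ 2)))) :
    (μ {ω | ∀ i, i ≠ k →
        β i * P i * G i (R i ω) ≤ β k * P k * G k (R k ω)}).toReal =
      2 * Real.pi * lam k *
        ((∑ j ∈ Finset.range (K - 1), ∫ u in Set.Ico (r j) (r (j + 1)), F j u) +
          ∫ u in Set.Ici (r (K - 1)), F (K - 1) u) := by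
  have hanti : ∀ i, AntitoneOn (G i) (Set.Ici 0) := fun i x hx y _ hxy => hGanti i x y hx hxy
  have hinv : ∀ i, IsGeneralizedInverse_s9 (G i) (Ginv i) := fun i =>
    isGeneralizedInverse_of_eq_sInf (hGcont i) (hanti i) (hGlim i) (hGinv1 i) (hGinv2 i)
  have hw : ∀ i, 0 < β i * P i := fun i => mul_pos (hβ i) (hP i)
  have hc : ∀ i, 0 < β k * P k / (β i * P i) := fun i => div_pos (hw k) (hw i)
  have hQmono : ∀ i, MonotoneOn (Q i) (Set.Ici 0) := fun i =>
    funext (hQ i) ▸ (hinv i).monotoneOn_comp_const_mul (hc i) (hanti k) (hGpos k)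
  have hr : MonotoneOn r (Set.Iic (K - 1)) := (hinv k).monotoneOn_breakpoints
    (fun j => ha (σ j) ▸ mul_pos (div_pos (hw _) (hw k)) (hGpos _ 0 le_rfl)) hσdesc hr0 hrsucc
  have hinactive : ∀ (i : Fin (K - 1)) u, r 0 ≤ u → u < r (i + 1) →
      lam (σ i) * Q (σ i) u ^ 2 = 0 := by
    intro i u hu hlt
    rw [hrsucc, ha, ← inv_div] at hlt
    rw [hQ, (hinv _).eq_zero_of_lt (hinv k) (hc _) (hGpos _ 0 le_rfl) (hr0 ▸ hu) hlt]
    ring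
  have hfull : ∀ u, F (K - 1) u = u * Real.exp (-(Real.pi * (lam k * u ^ 2 +
      ∑ i ∈ Finset.univ.erase k, lam i * Q i u ^ 2))) := fun u => by
    rw [hF, Finset.filter_true_of_mem fun i _ => i.2,
      ← image_univ_eq_univ_erase hσinj hσk (by simp), Finset.sum_image hσinj.injOn]
  have hsegment : ∀ j ∈ Finset.range (K - 1), ∫ u in Set.Ico (r j) (r (j + 1)), F j u =
      ∫ u in Set.Ico (r j) (r (j + 1)), F (K - 1) u := fun j hj =>
    setIntegral_congr_fun measurableSet_Ico fun u hu => by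
      rw [hF, sum_filter_lt_eq_sum_of_mem_Ico hr (Finset.mem_range.1 hj).le hinactive hu, hF,
        Finset.filter_true_of_mem fun i _ => i.2]
  have hint : IntegrableOn (F (K - 1)) (Set.Ici (r 0)) := by
    rw [hr0, funext hfull]
    exact integrableOn_Ici_mul_exp_neg Real.pi_pos (hlam k) (aemeasurable_sum_mul_sq hQmono lam _)
      fun u _ => Finset.sum_nonneg fun i _ => mul_nonneg (hlam i).le (sq_nonneg _)
  rw [toReal_measure_association_eq_integral hw hinv (hanti k) (hGpos k) hRmeas hRnn hRindep
    (hlam k) hsurv, Finset.sum_congr rfl hsegment, sum_setIntegral_Ico_add_setIntegral_Ici hr hint,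
    hr0]
  simp only [hfull, hQ]

/-- Lemma 6: in the homogeneous BARSS setup with strictly decreasing path-loss
functions, the tier-`k` association probability is the sum of integrals over the
segments `[r_{j−1}, r_j)` determined by the descending enumeration `σ` of the
thresholds `a_i = (β_i P_i/(β_k P_k)) G_i(0)`, `i ≠ k` (here `σ : Fin (K−1) → Fin K`
enumerates the tiers `≠ k` in descending threshold order, `r 0 = 0`,
`r (j+1) = G_k^{-1}(a_{σ(j)})`, and the last segment extends to `+∞`). -/
theorem barss_association_probability_enumerated
    {Ω : Type*} [MeasureSpace Ω] [IsProbabilityMeasure (ℙ : Measure Ω)]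
    (K : ℕ) (hK : 2 ≤ K) (k : Fin K)
    (β P lam : Fin K → ℝ)
    (hβ : ∀ i, 0 < β i) (hP : ∀ i, 0 < P i) (hlam : ∀ i, 0 < lam i)
    (G : Fin K → ℝ → ℝ)
    (hGcont : ∀ i, ContinuousOn (G i) (Set.Ici 0))
    (hGanti : ∀ i, ∀ x y : ℝ, 0 ≤ x → x ≤ y → G i y ≤ G i x)
    (hGstrict : ∀ i, ∀ x y : ℝ, 0 ≤ x → x < y → G i y < G i x)
    (hGpos : ∀ i, ∀ x : ℝ, 0 ≤ x → 0 < G i x)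
    (hGlim : ∀ i, Filter.Tendsto (G i) Filter.atTop (nhds 0))
    (Ginv : Fin K → ℝ → ℝ)
    (hGinv1 : ∀ i, ∀ y : ℝ, 0 < y → y ≤ G i 0 →
      Ginv i y = sInf {x : ℝ | 0 ≤ x ∧ G i x = y})
    (hGinv2 : ∀ i, ∀ y : ℝ, G i 0 < y → Ginv i y = 0)
    (Q : Fin K → ℝ → ℝ)
    (hQ : ∀ i u, Q i u = Ginv i (β k * P k / (β i * P i) * G k u))
    (R : Fin K → Ω → ℝ)
    (hRmeas : ∀ i, Measurable (R i)) (hRnn : ∀ i ω, 0 ≤ R i ω)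
    (hRindep : iIndepFun R ℙ)
    (hsurv : ∀ i, ∀ r : ℝ, 0 ≤ r →
      ℙ {ω | r ≤ R i ω} = ENNReal.ofReal (Real.exp (-(Real.pi * lam i * r ^ 2))))
    (a : Fin K → ℝ) (ha : ∀ i, a i = β i * P i / (β k * P k) * G i 0)
    (σ : Fin (K - 1) → Fin K)
    (hσinj : Function.Injective σ) (hσk : ∀ j, σ j ≠ k)
    (hσdesc : ∀ i j : Fin (K - 1), i ≤ j → a (σ j) ≤ a (σ i))
    (r : ℕ → ℝ) (hr0 : r 0 = 0)
    (hrsucc : ∀ j : Fin (K - 1), r ((j : ℕ) + 1) = Ginv k (a (σ j)))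
    (F : ℕ → ℝ → ℝ)
    (hF : ∀ (j : ℕ) (u : ℝ), F j u =
      u * Real.exp (-(Real.pi * (lam k * u ^ 2 +
        ∑ i ∈ Finset.univ.filter (fun i : Fin (K - 1) => (i : ℕ) < j),
          lam (σ i) * (Q (σ i) u) ^ 2)))) :
    (ℙ {ω | ∀ i, i ≠ k →
        β i * P i * G i (R i ω) ≤ β k * P k * G k (R k ω)}).toReal =
      2 * Real.pi * lam k *
        ((∑ j ∈ Finset.range (K - 1), ∫ u in Set.Ico (r j) (r (j + 1)), F j u) +
          ∫ u in Set.Ici (r (K - 1)), F (K - 1) u) :=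
  barss_association_probability_enumerated_general K k β P lam hβ hP hlam G hGcont hGanti hGpos
    hGlim Ginv hGinv1 hGinv2 Q hQ R hRmeas hRnn hRindep hsurv a ha σ hσinj hσk hσdesc r hr0 hrsucc
    F hF
end

section
/- In the BARSS nearest-distance setup described in the context, fix k. Then for every r ≥ 0, P( R_k ≤ r and β_i·P_i·G_i(R_i) ≤ β_k·P_k·G_k(R_k) for all i ≠ k ) = ∫₀^r ( ∏_{i≠k} exp(−m_i(Q_i^{(k)}(u))) )·f_{R_k}(u) du. Consequently, the conditional distribution of the connection distance R* = R_k given the association event {A* = k} has density f_k(u) = (1/p_k*)·( ∏_{i≠k} exp(−m_i(Q_i^{(k)}(u))) )·f_{R_k}(u), where p_k* is the tier-k association probability. -/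
open MeasureTheory ProbabilityTheory
open scoped ProbabilityTheory ENNReal

/-!
Since `G i` is continuous and decreases to `0`, `β i * P i * G i x ≤ β k * P k * G k u` says exactly
`Q i u ≤ x`. Conditionally on `R k = u`, association with tier `k` is therefore the intersection of
the independent events `Q i u ≤ R i`, of probability `∏ exp (-m i (Q i u))`, and integrating
against the density of `R k`, minus the derivative of `exp (-m k)`, gives the joint law.
-/

section GeneralizedInverse

/-- `Ginv` is the generalized inverse, at positive levels, of a path-loss function `G` on
`[0, ∞)`. Its values at nonpositive levels are unconstrained. -/
structure IsGeneralizedInverse_s10 (G Ginv : ℝ → ℝ) : Prop where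
  eq_sInf : ∀ y, 0 < y → y ≤ G 0 → Ginv y = sInf {x | 0 ≤ x ∧ G x = y}
  eq_zero : ∀ y, G 0 < y → Ginv y = 0

lemma isLeast_sublevel_sInf_level {g : ℝ → ℝ} {a y : ℝ} (hcont : ContinuousOn g (Set.Ici a))
    (hya : y ≤ g a) (hy : ∃ x, a ≤ x ∧ g x ≤ y) :
    IsLeast {x | a ≤ x ∧ g x ≤ y} (sInf {x | a ≤ x ∧ g x = y}) := by
  have hbdd : BddBelow {x | a ≤ x ∧ g x = y} := ⟨a, fun x hx => hx.1⟩
  have hlevel : ∀ x, a ≤ x → g x ≤ y → ∃ z, (a ≤ z ∧ g z = y) ∧ z ≤ x := by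
    intro x hax hxy
    obtain ⟨z, hz, hzy⟩ :=
      intermediate_value_Icc' hax (hcont.mono Set.Icc_subset_Ici_self) ⟨hxy, hya⟩
    exact ⟨z, ⟨hz.1, hzy⟩, hz.2⟩
  have hclosed : IsClosed {x | a ≤ x ∧ g x = y} :=
    hcont.preimage_isClosed_of_isClosed isClosed_Ici (isClosed_singleton (x := y))
  obtain ⟨x, hax, hxy⟩ := hy
  obtain ⟨z, hz, -⟩ := hlevel x hax hxy
  have hmem := hclosed.csInf_mem ⟨z, hz⟩ hbdd
  refine ⟨⟨hmem.1, hmem.2.le⟩, fun x hx => ?_⟩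
  obtain ⟨z, hz, hzx⟩ := hlevel x hx.1 hx.2
  exact (csInf_le hbdd hz).trans hzx

namespace IsGeneralizedInverse_s10

variable {G Ginv : ℝ → ℝ} {y : ℝ}

lemma isLeast_sublevel (h : IsGeneralizedInverse_s10 G Ginv) (hcont : ContinuousOn G (Set.Ici 0))
    (hlim : Filter.Tendsto G Filter.atTop (nhds 0)) (hy : 0 < y) :
    IsLeast {x | 0 ≤ x ∧ G x ≤ y} (Ginv y) := by
  rcases lt_or_ge (G 0) y with hlt | hle
  · rw [h.eq_zero y hlt]
    exact ⟨⟨le_rfl, hlt.le⟩, fun x hx => hx.1⟩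
  · rw [h.eq_sInf y hy hle]
    obtain ⟨x, hx0, hxy⟩ :=
      ((Filter.eventually_ge_atTop 0).and (hlim.eventually (gt_mem_nhds hy))).exists
    exact isLeast_sublevel_sInf_level hcont hle ⟨x, hx0, hxy.le⟩

lemma le_iff (h : IsGeneralizedInverse_s10 G Ginv) (hcont : ContinuousOn G (Set.Ici 0))
    (hanti : AntitoneOn G (Set.Ici 0)) (hlim : Filter.Tendsto G Filter.atTop (nhds 0))
    (hy : 0 < y) {x : ℝ} (hx : 0 ≤ x) : Ginv y ≤ x ↔ G x ≤ y :=
  have hleast := h.isLeast_sublevel hcont hlim hy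
  ⟨fun hle => (hanti hleast.1.1 hx hle).trans hleast.1.2, fun hle => hleast.2 ⟨hx, hle⟩⟩

end IsGeneralizedInverse_s10

end GeneralizedInverse

section TailDensity

lemma antitone_measureReal_Ici_s10 (ν : Measure ℝ) [IsFiniteMeasure ν] :
    Antitone fun r => ν.real (Set.Ici r) :=
  fun _ _ h => measureReal_mono (Set.Ici_subset_Ici.2 h)

lemma tendsto_measureReal_Ici_atTop_s10 (ν : Measure ℝ) [IsFiniteMeasure ν] :
    Filter.Tendsto (fun r => ν.real (Set.Ici r)) Filter.atTop (nhds 0) := by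
  have hinter : ⋂ r : ℝ, Set.Ici r = ∅ := Set.eq_empty_of_forall_notMem fun x hx =>
    (lt_add_one x).not_ge (Set.mem_iInter.1 hx (x + 1))
  have htendsto := tendsto_measure_iInter_atTop (μ := ν) (s := fun r : ℝ => Set.Ici r)
    (fun _ => measurableSet_Ici.nullMeasurableSet) antitone_Ici ⟨0, measure_ne_top _ _⟩
  rw [hinter, measure_empty] at htendsto
  exact (ENNReal.tendsto_toReal ENNReal.zero_ne_top).comp htendsto

variable {ν : Measure ℝ} [IsFiniteMeasure ν] {f : ℝ → ℝ} {a : ℝ}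

lemma density_nonneg_of_hasDerivAt_tail {u : ℝ}
    (hderiv : HasDerivAt (fun r => ν.real (Set.Ici r)) (-f u) u) : 0 ≤ f u :=
  neg_nonpos.1 (hderiv.nonpos_of_antitone (antitone_measureReal_Ici_s10 ν))

lemma integrableOn_density_of_hasDerivAt_tail
    (hcont : ContinuousOn (fun r => ν.real (Set.Ici r)) (Set.Ici a))
    (hderiv : ∀ u ∈ Set.Ioi a, HasDerivAt (fun r => ν.real (Set.Ici r)) (-f u) u) :
    IntegrableOn f (Set.Ioi a) := by
  have hneg := integrableOn_Ioi_deriv_of_nonpos (hcont a Set.self_mem_Ici) hderiv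
    (fun u hu => neg_nonpos.2 (density_nonneg_of_hasDerivAt_tail (hderiv u hu)))
    (tendsto_measureReal_Ici_atTop_s10 ν)
  exact integrable_neg_iff.1 hneg

lemma lintegral_Ioi_density_of_hasDerivAt_tail
    (hcont : ContinuousOn (fun r => ν.real (Set.Ici r)) (Set.Ici a))
    (hderiv : ∀ u ∈ Set.Ioi a, HasDerivAt (fun r => ν.real (Set.Ici r)) (-f u) u) :
    ∫⁻ u in Set.Ioi a, ENNReal.ofReal (f u) = ν (Set.Ici a) := by
  have hnonneg : ∀ u ∈ Set.Ioi a, 0 ≤ f u := fun u hu =>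
    density_nonneg_of_hasDerivAt_tail (hderiv u hu)
  have hintegral : ∫ u in Set.Ioi a, f u = ν.real (Set.Ici a) := by
    have hneg := integral_Ioi_of_hasDerivAt_of_nonpos (hcont a Set.self_mem_Ici) hderiv
      (fun u hu => neg_nonpos.2 (hnonneg u hu)) (tendsto_measureReal_Ici_atTop_s10 ν)
    rwa [integral_neg, zero_sub, neg_inj] at hneg
  rw [← ofReal_integral_eq_lintegral_ofReal
    (integrableOn_density_of_hasDerivAt_tail hcont hderiv)
    (ae_restrict_of_forall_mem measurableSet_Ioi hnonneg), hintegral, ofReal_measureReal]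

lemma restrict_Ici_eq_withDensity_of_hasDerivAt_tail
    (hcont : ContinuousOn (fun r => ν.real (Set.Ici r)) (Set.Ici a))
    (hderiv : ∀ u ∈ Set.Ioi a, HasDerivAt (fun r => ν.real (Set.Ici r)) (-f u) u) :
    ν.restrict (Set.Ici a) =
      (volume.restrict (Set.Ioi a)).withDensity fun u => ENNReal.ofReal (f u) := by
  refine Measure.ext_of_Ici _ _ fun b => ?_
  have hset : (Set.Ici b ∩ Set.Ioi a : Set ℝ) =ᵐ[volume] Set.Ioi (b ⊔ a) := by
    rw [← Set.Ioi_inter_Ioi]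
    exact Ioi_ae_eq_Ici.symm.inter (Filter.EventuallyEq.refl _ _)
  rw [Measure.restrict_apply measurableSet_Ici, Set.Ici_inter_Ici,
    withDensity_apply _ measurableSet_Ici, Measure.restrict_restrict measurableSet_Ici,
    Measure.restrict_congr_set hset]
  exact (lintegral_Ioi_density_of_hasDerivAt_tail
    (hcont.mono (Set.Ici_subset_Ici.2 le_sup_right))
    fun u hu => hderiv u (Set.Ioi_subset_Ioi le_sup_right hu)).symm

lemma setIntegral_Icc_eq_setIntegral_Ioc_mul_density
    (hcont : ContinuousOn (fun r => ν.real (Set.Ici r)) (Set.Ici a))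
    (hderiv : ∀ u ∈ Set.Ioi a, HasDerivAt (fun r => ν.real (Set.Ici r)) (-f u) u)
    (h : ℝ → ℝ) (r : ℝ) :
    ∫ u in Set.Icc a r, h u ∂ν = ∫ u in Set.Ioc a r, h u * f u := by
  have hmeas : AEMeasurable (fun u => ENNReal.ofReal (f u)) (volume.restrict (Set.Ioi a)) :=
    (integrableOn_density_of_hasDerivAt_tail hcont hderiv).aemeasurable.ennreal_ofReal
  rw [← Set.Iic_inter_Ici, ← Measure.restrict_restrict measurableSet_Iic,
    restrict_Ici_eq_withDensity_of_hasDerivAt_tail hcont hderiv,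
    setIntegral_withDensity_eq_setIntegral_toReal_smul₀ hmeas.restrict
      (ae_of_all _ fun _ => ENNReal.ofReal_lt_top) _ measurableSet_Iic,
    Measure.restrict_restrict measurableSet_Iic, Set.Iic_inter_Ioi]
  refine setIntegral_congr_fun measurableSet_Ioc fun u hu => ?_
  simp only [smul_eq_mul,
    ENNReal.toReal_ofReal (density_nonneg_of_hasDerivAt_tail (hderiv u hu.1)), mul_comm]

end TailDensity

section Independence

variable {Ω : Type*} [MeasurableSpace Ω] {μ : Measure Ω}

lemma measureReal_pair_mem_eq_integral [IsFiniteMeasure μ] {E F : Type*} [MeasurableSpace E]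
    [MeasurableSpace F] {X : Ω → E} {Y : Ω → F} (hX : AEMeasurable X μ) (hY : AEMeasurable Y μ)
    (hXY : IndepFun X Y μ) {T : Set (E × F)} (hT : MeasurableSet T) :
    μ.real {ω | (X ω, Y ω) ∈ T} = ∫ x, μ.real {ω | (x, Y ω) ∈ T} ∂(μ.map X) := by
  have hsection : ∀ x, μ.map Y (Prod.mk x ⁻¹' T) = μ {ω | (x, Y ω) ∈ T} := fun x =>
    Measure.map_apply_of_aemeasurable hY (measurable_prodMk_left hT)
  have hmeas : Measurable fun x => μ {ω | (x, Y ω) ∈ T} := by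
    simpa only [hsection] using measurable_measure_prodMk_left (ν := μ.map Y) hT
  have hpair : μ {ω | (X ω, Y ω) ∈ T} = ∫⁻ x, μ {ω | (x, Y ω) ∈ T} ∂(μ.map X) :=
    calc μ {ω | (X ω, Y ω) ∈ T}
        = μ.map (fun ω => (X ω, Y ω)) T :=
          (Measure.map_apply_of_aemeasurable (hX.prodMk hY) hT).symm
      _ = ∫⁻ x, μ {ω | (x, Y ω) ∈ T} ∂(μ.map X) := by
          simp only [hXY.map_prod_eq_prod_map_map hX hY, Measure.prod_apply hT, hsection]
  simp only [measureReal_def]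
  rw [hpair, integral_toReal hmeas.aemeasurable (ae_of_all _ fun x => measure_lt_top _ _)]

variable {ι : Type*} {E : ι → Type*} [∀ i, MeasurableSpace (E i)] {X : ∀ i, Ω → E i}

lemma measureReal_forall_mem_eq_prod (hindep : iIndepFun X μ) (s : Finset ι)
    {B : ∀ i, Set (E i)} (hB : ∀ i ∈ s, MeasurableSet (B i)) :
    μ.real {ω | ∀ i ∈ s, X i ω ∈ B i} = ∏ i ∈ s, μ.real (X i ⁻¹' B i) := by
  have hinter : {ω | ∀ i ∈ s, X i ω ∈ B i} = ⋂ i ∈ s, X i ⁻¹' B i := by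
    ext ω
    simp only [Set.mem_ofPred_eq, Set.mem_iInter, Set.mem_preimage]
  simp only [hinter, measureReal_def, hindep.measure_inter_preimage_eq_mul s hB,
    ENNReal.toReal_prod]

lemma measureReal_forall_pair_mem_eq_setIntegral_prod [Fintype ι] [DecidableEq ι] (k : ι)
    (hX : ∀ i, AEMeasurable (X i) μ) (hindep : iIndepFun X μ) {A : Set (E k)}
    (hA : MeasurableSet A) {T : ∀ i, Set (E k × E i)} (hT : ∀ i ≠ k, MeasurableSet (T i)) :
    μ.real {ω | X k ω ∈ A ∧ ∀ i ≠ k, (X k ω, X i ω) ∈ T i} =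
      ∫ x in A, ∏ i ∈ Finset.univ.erase k, μ.real {ω | (x, X i ω) ∈ T i} ∂(μ.map (X k)) := by
  have := hindep.isProbabilityMeasure
  let Y : Ω → ∀ i : ↥(Finset.univ.erase k), E i := fun ω i => X i ω
  have hXY : IndepFun (X k) Y μ :=
    (hindep.indepFun_finset₀ {k} (Finset.univ.erase k) (by simp) hX).comp
      (measurable_pi_apply (⟨k, Finset.mem_singleton_self k⟩ : ↥({k} : Finset ι))) measurable_id
  let S : Set (E k × ∀ i : ↥(Finset.univ.erase k), E i) :=
    Prod.fst ⁻¹' A ∩ ⋂ i, (fun p => (p.1, p.2 i)) ⁻¹' T i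
  have hS : MeasurableSet S := by
    refine (measurable_fst hA).inter (MeasurableSet.iInter fun i => ?_)
    exact (by fun_prop : Measurable fun p : E k × ∀ i : ↥(Finset.univ.erase k), E i =>
      (p.1, p.2 i)) (hT i (Finset.ne_of_mem_erase i.2))
  have hmem : ∀ x ω, (x, Y ω) ∈ S ↔
      x ∈ A ∧ ∀ i ∈ Finset.univ.erase k, X i ω ∈ Prod.mk x ⁻¹' T i := fun x ω => by
    simp [S, Y]
  calc μ.real {ω | X k ω ∈ A ∧ ∀ i ≠ k, (X k ω, X i ω) ∈ T i}
      = μ.real {ω | (X k ω, Y ω) ∈ S} := by simp [hmem]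
    _ = ∫ x, μ.real {ω | (x, Y ω) ∈ S} ∂(μ.map (X k)) :=
        measureReal_pair_mem_eq_integral (hX k) (by fun_prop) hXY hS
    _ = ∫ x in A, ∏ i ∈ Finset.univ.erase k, μ.real {ω | (x, X i ω) ∈ T i} ∂(μ.map (X k)) := by
        rw [← integral_indicator hA]
        refine integral_congr_ae (ae_of_all _ fun x => ?_)
        have hprod := measureReal_forall_mem_eq_prod hindep (Finset.univ.erase k)
          fun i hi => measurable_prodMk_left (x := x) (hT i (Finset.ne_of_mem_erase hi))
        by_cases hx : x ∈ A
        · simp only [hmem, hx, true_and, Set.indicator_of_mem]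
          exact hprod
        · simp [hmem, hx]

end Independence

section ExponentialSurvival

variable {Ω : Type*} [MeasurableSpace Ω] {μ : Measure Ω} {X : Ω → ℝ} {m m' : ℝ → ℝ} {a : ℝ}

lemma setIntegral_Icc_map_of_survival_eq_exp_neg [IsFiniteMeasure μ] (hX : AEMeasurable X μ)
    (hsurv : ∀ r, a ≤ r → μ {ω | r ≤ X ω} = ENNReal.ofReal (Real.exp (-(m r))))
    (hcont : ContinuousOn m (Set.Ici a)) (hderiv : ∀ u, a < u → HasDerivAt m (m' u) u)
    (h : ℝ → ℝ) (r : ℝ) :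
    ∫ u in Set.Icc a r, h u ∂(μ.map X) =
      ∫ u in Set.Ioc a r, h u * (m' u * Real.exp (-(m u))) := by
  have htail : Set.EqOn (fun r => (μ.map X).real (Set.Ici r)) (fun r => Real.exp (-(m r)))
      (Set.Ici a) := fun r hr => by
    have hmap : μ.map X (Set.Ici r) = ENNReal.ofReal (Real.exp (-(m r))) :=
      (Measure.map_apply_of_aemeasurable hX measurableSet_Ici).trans (hsurv r hr)
    simp only [measureReal_def, hmap, ENNReal.toReal_ofReal (Real.exp_pos _).le]
  refine setIntegral_Icc_eq_setIntegral_Ioc_mul_density (hcont.neg.rexp.congr htail)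
    (fun u hu => ?_) h r
  have hexp : HasDerivAt (fun r => Real.exp (-(m r))) (-(m' u * Real.exp (-(m u)))) u :=
    (hderiv u hu).fun_neg.exp.congr_deriv (by ring)
  exact hexp.congr_of_eventuallyEq (htail.eventuallyEq_of_mem (Ici_mem_nhds hu))

end ExponentialSurvival

section Association

/-- The pairs `(u, x)` of distances at which a station at distance `u`, with weight `c` and path
loss `g`, is at least as attractive as one at distance `x`, with weight `d` and path loss `h`.
Distances are restricted to `[0, ∞)`, where the path losses are controlled. -/
def associationRegion (c : ℝ) (g : ℝ → ℝ) (d : ℝ) (h : ℝ → ℝ) : Set (ℝ × ℝ) :=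
  {p ∈ Set.Ici 0 ×ˢ Set.Ici 0 | d * h p.2 ≤ c * g p.1}

variable {c d u x : ℝ} {g h hinv : ℝ → ℝ}

lemma mem_associationRegion (hu : 0 ≤ u) (hx : 0 ≤ x) :
    (u, x) ∈ associationRegion c g d h ↔ d * h x ≤ c * g u :=
  and_iff_right ⟨hu, hx⟩

lemma isClosed_associationRegion (hg : ContinuousOn g (Set.Ici 0))
    (hh : ContinuousOn h (Set.Ici 0)) : IsClosed (associationRegion c g d h) :=
  (isClosed_Ici.prod isClosed_Ici).isClosed_le
    ((hh.comp continuousOn_snd fun _ hp => hp.2).const_mul d)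
    ((hg.comp continuousOn_fst fun _ hp => hp.1).const_mul c)

lemma mem_associationRegion_iff_le (hinverse : IsGeneralizedInverse_s10 h hinv)
    (hcont : ContinuousOn h (Set.Ici 0)) (hanti : AntitoneOn h (Set.Ici 0))
    (hlim : Filter.Tendsto h Filter.atTop (nhds 0)) (hc : 0 < c) (hd : 0 < d) (hgu : 0 < g u)
    (hu : 0 ≤ u) (hx : 0 ≤ x) :
    (u, x) ∈ associationRegion c g d h ↔ hinv (c / d * g u) ≤ x := by
  rw [mem_associationRegion hu hx, hinverse.le_iff hcont hanti hlim (by positivity) hx,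
    div_mul_eq_mul_div, le_div_iff₀' hd]

lemma measureReal_pair_mem_associationRegion {Ω : Type*} [MeasurableSpace Ω] {μ : Measure Ω}
    {X : Ω → ℝ} {m : ℝ → ℝ} (hinverse : IsGeneralizedInverse_s10 h hinv)
    (hcont : ContinuousOn h (Set.Ici 0)) (hanti : AntitoneOn h (Set.Ici 0))
    (hlim : Filter.Tendsto h Filter.atTop (nhds 0)) (hc : 0 < c) (hd : 0 < d) (hgu : 0 < g u)
    (hu : 0 ≤ u) (hX : ∀ ω, 0 ≤ X ω)
    (hsurv : ∀ r, 0 ≤ r → μ {ω | r ≤ X ω} = ENNReal.ofReal (Real.exp (-(m r)))) :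
    μ.real {ω | (u, X ω) ∈ associationRegion c g d h} =
      Real.exp (-(m (hinv (c / d * g u)))) := by
  have hnonneg : 0 ≤ hinv (c / d * g u) :=
    (hinverse.isLeast_sublevel hcont hlim (by positivity)).1.1
  simp only [mem_associationRegion_iff_le hinverse hcont hanti hlim hc hd hgu hu (hX _),
    measureReal_def, hsurv _ hnonneg, ENNReal.toReal_ofReal (Real.exp_pos _).le]

end Association

-- For `p = 0` the factor `1 / p` is the junk value `0`, but then `J` vanishes as well.
lemma eq_integral_mul_one_div_mul {α : Type*} [MeasurableSpace α] {ν : Measure α} {h : α → ℝ}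
    {J p : ℝ} (hJ : J = ∫ x, h x ∂ν) (hJ0 : 0 ≤ J) (hJp : J ≤ p) :
    J = ∫ x, p * (1 / p * h x) ∂ν := by
  rw [integral_const_mul, integral_const_mul, ← hJ]
  rcases eq_or_ne p 0 with rfl | hp
  · rw [zero_mul, le_antisymm hJp hJ0]
  · field_simp

theorem barss_conditional_connection_distance_general
    {Ω ι : Type*} [MeasurableSpace Ω] {μ : Measure Ω} [Fintype ι] [DecidableEq ι] (k : ι)
    {b : ι → ℝ} (hb : ∀ i, 0 < b i)
    {G : ι → ℝ → ℝ} (hGcont : ∀ i, ContinuousOn (G i) (Set.Ici 0))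
    (hGanti : ∀ i ≠ k, AntitoneOn (G i) (Set.Ici 0))
    (hGpos : ∀ x, 0 ≤ x → 0 < G k x)
    (hGlim : ∀ i ≠ k, Filter.Tendsto (G i) Filter.atTop (nhds 0))
    {Ginv : ι → ℝ → ℝ} (hGinv : ∀ i ≠ k, IsGeneralizedInverse_s10 (G i) (Ginv i))
    {Q : ι → ℝ → ℝ} (hQ : ∀ i u, Q i u = Ginv i (b k / b i * G k u))
    {R : ι → Ω → ℝ} (hRmeas : ∀ i, AEMeasurable (R i) μ) (hRnn : ∀ i ω, 0 ≤ R i ω)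
    (hRindep : iIndepFun R μ)
    {m : ι → ℝ → ℝ} (hmcont : ContinuousOn (m k) (Set.Ici 0))
    (hsurv : ∀ i r, 0 ≤ r → μ {ω | r ≤ R i ω} = ENNReal.ofReal (Real.exp (-(m i r))))
    {mk' : ℝ → ℝ} (hmderiv : ∀ u, 0 < u → HasDerivAt (m k) (mk' u) u)
    {pk : ℝ} (hpk : pk = μ.real {ω | ∀ i, i ≠ k → b i * G i (R i ω) ≤ b k * G k (R k ω)})
    {fk : ℝ → ℝ} (hfk : ∀ u, fk u = (1 / pk) *
      ((∏ i ∈ Finset.univ.erase k, Real.exp (-(m i (Q i u)))) *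
        (mk' u * Real.exp (-(m k u))))) (r : ℝ) :
    μ.real {ω | R k ω ≤ r ∧ ∀ i, i ≠ k → b i * G i (R i ω) ≤ b k * G k (R k ω)} =
        ∫ u in Set.Ioc (0 : ℝ) r,
          (∏ i ∈ Finset.univ.erase k, Real.exp (-(m i (Q i u)))) *
            (mk' u * Real.exp (-(m k u))) ∧
    μ.real {ω | R k ω ≤ r ∧ ∀ i, i ≠ k → b i * G i (R i ω) ≤ b k * G k (R k ω)} =
        ∫ u in Set.Ioc (0 : ℝ) r, pk * fk u := by
  have := hRindep.isProbabilityMeasure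
  let T : ι → Set (ℝ × ℝ) := fun i => associationRegion (b k) (G k) (b i) (G i)
  have hevent : {ω | R k ω ≤ r ∧ ∀ i, i ≠ k → b i * G i (R i ω) ≤ b k * G k (R k ω)} =
      {ω | R k ω ∈ Set.Icc 0 r ∧ ∀ i ≠ k, (R k ω, R i ω) ∈ T i} := by
    ext ω
    simp only [T, Set.mem_ofPred_eq, Set.mem_Icc, hRnn, true_and,
      mem_associationRegion (hRnn k ω) (hRnn _ ω)]
  have hsection : ∀ u, 0 ≤ u → ∀ i ∈ Finset.univ.erase k,
      μ.real {ω | (u, R i ω) ∈ T i} = Real.exp (-(m i (Q i u))) := fun u hu i hi => by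
    have hik := Finset.ne_of_mem_erase hi
    rw [hQ]
    exact measureReal_pair_mem_associationRegion (hGinv i hik) (hGcont i) (hGanti i hik)
      (hGlim i hik) (hb k) (hb i) (hGpos u hu) hu (hRnn i) (hsurv i)
  have hjoint : μ.real {ω | R k ω ≤ r ∧ ∀ i, i ≠ k → b i * G i (R i ω) ≤ b k * G k (R k ω)} =
      ∫ u in Set.Ioc (0 : ℝ) r, (∏ i ∈ Finset.univ.erase k, Real.exp (-(m i (Q i u)))) *
        (mk' u * Real.exp (-(m k u))) :=
    calc μ.real {ω | R k ω ≤ r ∧ ∀ i, i ≠ k → b i * G i (R i ω) ≤ b k * G k (R k ω)}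
        = ∫ u in Set.Icc 0 r, ∏ i ∈ Finset.univ.erase k, μ.real {ω | (u, R i ω) ∈ T i}
            ∂(μ.map (R k)) := by
          rw [hevent]
          exact measureReal_forall_pair_mem_eq_setIntegral_prod k hRmeas hRindep
            measurableSet_Icc fun i _ =>
              (isClosed_associationRegion (hGcont k) (hGcont i)).measurableSet
      _ = ∫ u in Set.Icc 0 r, ∏ i ∈ Finset.univ.erase k, Real.exp (-(m i (Q i u)))
            ∂(μ.map (R k)) :=
          setIntegral_congr_fun measurableSet_Icc fun u hu =>
            Finset.prod_congr rfl (hsection u hu.1)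
      _ = _ := setIntegral_Icc_map_of_survival_eq_exp_neg (hRmeas k) (hsurv k) hmcont hmderiv _ r
  refine ⟨hjoint, ?_⟩
  simp only [hfk]
  exact eq_integral_mul_one_div_mul hjoint measureReal_nonneg
    (hpk ▸ measureReal_mono fun ω hω => hω.2)

/-- Lemma 7: the joint law of the tier-`k` nearest distance and the BARSS
association event, and the resulting conditional density of the connection
distance given association with tier `k` (non-homogeneous deployments). -/
theorem barss_conditional_connection_distance
    {Ω : Type*} [MeasureSpace Ω] [IsProbabilityMeasure (ℙ : Measure Ω)]
    (K : ℕ) (hK : 2 ≤ K) (k : Fin K)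
    (β P : Fin K → ℝ) (hβ : ∀ i, 0 < β i) (hP : ∀ i, 0 < P i)
    (G : Fin K → ℝ → ℝ)
    (hGcont : ∀ i, ContinuousOn (G i) (Set.Ici 0))
    (hGanti : ∀ i, ∀ x y : ℝ, 0 ≤ x → x ≤ y → G i y ≤ G i x)
    (hGpos : ∀ i, ∀ x : ℝ, 0 ≤ x → 0 < G i x)
    (hGlim : ∀ i, Filter.Tendsto (G i) Filter.atTop (nhds 0))
    (Ginv : Fin K → ℝ → ℝ)
    (hGinv1 : ∀ i, ∀ y : ℝ, 0 < y → y ≤ G i 0 →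
      Ginv i y = sInf {x : ℝ | 0 ≤ x ∧ G i x = y})
    (hGinv2 : ∀ i, ∀ y : ℝ, G i 0 < y → Ginv i y = 0)
    (Q : Fin K → ℝ → ℝ)
    (hQ : ∀ i u, Q i u = Ginv i (β k * P k / (β i * P i) * G k u))
    (R : Fin K → Ω → ℝ)
    (hRmeas : ∀ i, Measurable (R i)) (hRnn : ∀ i ω, 0 ≤ R i ω)
    (hRindep : iIndepFun R ℙ)
    (m : Fin K → ℝ → ℝ)
    (hmcont : ∀ i, ContinuousOn (m i) (Set.Ici 0))
    (hmmono : ∀ i, ∀ x y : ℝ, 0 ≤ x → x ≤ y → m i x ≤ m i y)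
    (hmnn : ∀ i, ∀ x : ℝ, 0 ≤ x → 0 ≤ m i x)
    (hm0 : ∀ i, m i 0 = 0)
    (hmtop : ∀ i, Filter.Tendsto (m i) Filter.atTop Filter.atTop)
    (hsurv : ∀ i, ∀ r : ℝ, 0 ≤ r →
      ℙ {ω | r ≤ R i ω} = ENNReal.ofReal (Real.exp (-(m i r))))
    (mk' : ℝ → ℝ) (hmk'cont : ContinuousOn mk' (Set.Ici 0))
    (hmderiv : ∀ u : ℝ, 0 ≤ u → HasDerivAt (m k) (mk' u) u)
    (pk : ℝ)
    (hpk : pk = (ℙ {ω | ∀ i, i ≠ k →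
      β i * P i * G i (R i ω) ≤ β k * P k * G k (R k ω)}).toReal)
    (fk : ℝ → ℝ)
    (hfk : ∀ u : ℝ, fk u = (1 / pk) *
      ((∏ i ∈ Finset.univ.erase k, Real.exp (-(m i (Q i u)))) *
        (mk' u * Real.exp (-(m k u))))) :
    (∀ r : ℝ, 0 ≤ r →
      (ℙ {ω | R k ω ≤ r ∧ ∀ i, i ≠ k →
          β i * P i * G i (R i ω) ≤ β k * P k * G k (R k ω)}).toReal =
        ∫ u in Set.Ioc (0 : ℝ) r,
          (∏ i ∈ Finset.univ.erase k, Real.exp (-(m i (Q i u)))) *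
            (mk' u * Real.exp (-(m k u)))) ∧
    (∀ r : ℝ, 0 ≤ r →
      (ℙ {ω | R k ω ≤ r ∧ ∀ i, i ≠ k →
          β i * P i * G i (R i ω) ≤ β k * P k * G k (R k ω)}).toReal =
        ∫ u in Set.Ioc (0 : ℝ) r, pk * fk u) := by
  have general := barss_conditional_connection_distance_general k (fun i => mul_pos (hβ i) (hP i))
    hGcont (fun i _ x hx y _ hxy => hGanti i x y hx hxy) (hGpos k) (fun i _ => hGlim i)
    (fun i _ => ⟨hGinv1 i, hGinv2 i⟩) hQ (fun i => (hRmeas i).aemeasurable) hRnn hRindep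
    (hmcont k) hsurv (fun u hu => hmderiv u hu.le) hpk hfk
  exact ⟨fun r _ => (general r).1, fun r _ => (general r).2⟩
end

section
/- In the homogeneous BARSS nearest-distance setup described in the context, with each G_i additionally strictly decreasing, fix k and let a_i, π, and r_0 ≤ r_1 ≤ … ≤ r_K be as defined there. Then the conditional density f_k of the connection distance R* given the association event {A* = k} satisfies, for each j ∈ {1,…,K} and every u ∈ [r_{j−1}, r_j), p_k*·f_k(u) = 2π·λ_k·u·exp( −π·( λ_k·u² + Σ_{i=1}^{j−1} λ_{π(i)}·(Q_{π(i)}^{(k)}(u))² ) ); equivalently, f_k(u) = (2π·λ_k/p_k*)·Σ_{j=1}^K u·exp( −π·( λ_k·u² + Σ_{i=1}^{j−1} λ_{π(i)}·(Q_{π(i)}^{(k)}(u))² ) )·1{u ∈ [r_{j−1}, r_j)}, where 'conditional density' means P(R_k ≤ r and A* = k) = ∫₀^r p_k*·f_k(u) du for all r ≥ 0. -/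
open MeasureTheory ProbabilityTheory
open scoped ProbabilityTheory ENNReal

/-!
With the Galois property `Q i u ≤ t ↔ β i * P i * G i t ≤ β k * P k * G k u`, tier `k` wins the
association exactly when `Q i (R k) ≤ R i` for every competitor `i`. Conditioning on `R k = u` and
using independence, each competitor contributes the void probability
`exp (-(π * lam i * (Q i u) ^ 2))`, which multiplies the density of `R k` at `u`. For
`u < r (j + 1)` the tiers `σ i` with `j ≤ i` are beaten even from distance `0`, since
`a (σ i) ≤ a (σ j) < G k u`; hence `Q (σ i) u = 0` and the sum in the exponent is truncated.
-/

section LowerInverse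

open Set

/-- `ginv` is the lower inverse of a nonincreasing `g` on `[0, ∞)`: it sends a level `y > 0` to the
least point of `[0, ∞)` at which `g` does not exceed `y`. Nothing is required at levels `y ≤ 0`. -/
structure IsLowerInverse (g ginv : ℝ → ℝ) : Prop where
  nonneg : ∀ {y}, 0 < y → 0 ≤ ginv y
  le_iff : ∀ {y t}, 0 < y → 0 ≤ t → (ginv y ≤ t ↔ g t ≤ y)

theorem isLowerInverse_of_eq_sInf {g ginv : ℝ → ℝ} (hcont : ContinuousOn g (Ici 0))
    (hanti : AntitoneOn g (Ici 0)) (hlim : Filter.Tendsto g Filter.atTop (nhds 0))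
    (heq : ∀ y, 0 < y → y ≤ g 0 → ginv y = sInf {x | 0 ≤ x ∧ g x = y})
    (hzero : ∀ y, g 0 < y → ginv y = 0) : IsLowerInverse g ginv := by
  have nonneg {y : ℝ} (hy : 0 < y) : 0 ≤ ginv y := by
    rcases le_or_gt y (g 0) with hy0 | hy0
    · exact heq y hy hy0 ▸ Real.sInf_nonneg fun x hx => hx.1
    · exact (hzero y hy0).ge
  refine ⟨nonneg, fun {y t} hy ht => ?_⟩
  rcases le_or_gt y (g 0) with hy0 | hy0
  · set L := {x | 0 ≤ x ∧ g x = y}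
    have hbdd : BddBelow L := ⟨0, fun x hx => hx.1⟩
    have exists_level {s : ℝ} (hs : 0 ≤ s) (hgs : g s ≤ y) : ∃ x ∈ L, x ≤ s := by
      obtain ⟨x, hx, hxy⟩ := intermediate_value_Icc' hs (hcont.mono Icc_subset_Ici_self) ⟨hgs, hy0⟩
      exact ⟨x, ⟨hx.1, hxy⟩, hx.2⟩
    have hne : L.Nonempty := by
      obtain ⟨s, hgs, hs⟩ :=
        ((hlim.eventually (gt_mem_nhds hy)).and (Filter.eventually_ge_atTop 0)).exists
      obtain ⟨x, hx, -⟩ := exists_level hs hgs.le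
      exact ⟨x, hx⟩
    have hclosed : IsClosed L := hcont.preimage_isClosed_of_isClosed isClosed_Ici isClosed_singleton
    have hattained : g (ginv y) = y := (heq y hy hy0 ▸ hclosed.csInf_mem hne hbdd).2
    constructor
    · intro hle
      exact (hanti (nonneg hy) ht hle).trans_eq hattained
    · intro hgt
      obtain ⟨x, hx, hxt⟩ := exists_level ht hgt
      exact heq y hy hy0 ▸ (csInf_le hbdd hx).trans hxt
  · rw [hzero y hy0]
    exact iff_of_true ht ((hanti self_mem_Ici ht ht).trans hy0.le)

namespace IsLowerInverse

variable {g ginv h hinv : ℝ → ℝ}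

theorem antitoneOn (hg : IsLowerInverse g ginv) : AntitoneOn ginv (Ioi 0) := fun _ hy _ hz hyz =>
  (hg.le_iff hz (hg.nonneg hy)).2 (((hg.le_iff hy (hg.nonneg hy)).1 le_rfl).trans hyz)

theorem eq_zero (hg : IsLowerInverse g ginv) {y : ℝ} (hy : 0 < y) (hgy : g 0 ≤ y) : ginv y = 0 :=
  ((hg.le_iff hy le_rfl).2 hgy).antisymm (hg.nonneg hy)

theorem lt_of_lt_apply (hg : IsLowerInverse g ginv) {y t : ℝ} (hy : 0 < y) (ht : 0 ≤ t)
    (h : t < ginv y) : y < g t :=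
  (lt_iff_lt_of_le_iff_le (hg.le_iff hy ht)).1 h

theorem apply_div_mul_le_iff (hg : IsLowerInverse g ginv) {v w x t : ℝ} (hv : 0 < v) (hw : 0 < w)
    (hx : 0 < x) (ht : 0 ≤ t) : ginv (v / w * x) ≤ t ↔ w * g t ≤ v * x := by
  rw [hg.le_iff (by positivity) ht, div_mul_eq_mul_div, le_div_iff₀' hw]

theorem monotoneOn_comp_const_mul (hg : IsLowerInverse g ginv) {D : Set ℝ} (hh : AntitoneOn h D)
    (hpos : ∀ x ∈ D, 0 < h x) {c : ℝ} (hc : 0 < c) : MonotoneOn (fun u => ginv (c * h u)) D :=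
  fun u hu v hv huv => hg.antitoneOn (mul_pos hc (hpos v hv)) (mul_pos hc (hpos u hu))
    (mul_le_mul_of_nonneg_left (hh hu hv huv) hc.le)

theorem apply_div_mul_eq_zero (hg : IsLowerInverse g ginv) (hh : IsLowerInverse h hinv)
    {v w y u : ℝ} (hv : 0 < v) (hw : 0 < w) (hy : 0 < y) (hgy : w / v * g 0 ≤ y) (hu : 0 ≤ u)
    (huy : u < hinv y) : ginv (v / w * h u) = 0 := by
  have hyu : y < h u := hh.lt_of_lt_apply hy hu huy
  have hhu : 0 < h u := hy.trans hyu
  refine hg.eq_zero (by positivity) ?_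
  calc g 0 = v / w * (w / v * g 0) := by field_simp
    _ ≤ v / w * h u := mul_le_mul_of_nonneg_left (hgy.trans hyu.le) (by positivity)

end IsLowerInverse

end LowerInverse

section RayleighLaw

open Set Real

theorem lintegral_Ioi_mul_exp_neg_mul_sq {c r : ℝ} (hc : 0 < c) (hr : 0 ≤ r) :
    ∫⁻ u in Ioi r, ENNReal.ofReal (2 * c * u * exp (-(c * u ^ 2))) =
      ENNReal.ofReal (exp (-(c * r ^ 2))) := by
  have hderiv : ∀ x ∈ Ici r, HasDerivAt (fun u => -exp (-(c * u ^ 2)))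
      (2 * c * x * exp (-(c * x ^ 2))) x := fun x _ =>
    ((hasDerivAt_pow 2 x).const_mul c).fun_neg.exp.fun_neg.congr_deriv (by push_cast; ring)
  have hnonneg : ∀ x ∈ Ioi r, 0 ≤ 2 * c * x * exp (-(c * x ^ 2)) := fun x hx => by
    have : 0 < x := hr.trans_lt hx
    positivity
  have hlim : Filter.Tendsto (fun u => -exp (-(c * u ^ 2))) Filter.atTop (nhds 0) := by
    simpa only [neg_zero, Function.comp_def] using (tendsto_exp_neg_atTop_nhds_zero.comp
      ((Filter.tendsto_pow_atTop two_ne_zero).const_mul_atTop hc)).neg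
  rw [← ofReal_integral_eq_lintegral_ofReal (integrableOn_Ioi_deriv_of_nonneg' hderiv hnonneg hlim)
      (ae_restrict_of_forall_mem measurableSet_Ioi hnonneg),
    integral_Ioi_of_hasDerivAt_of_nonneg' hderiv hnonneg hlim, zero_sub, neg_neg]

theorem map_eq_withDensity_of_measure_ge_eq_exp_neg_mul_sq {Ω : Type*} [MeasurableSpace Ω]
    {μ : Measure Ω} [IsProbabilityMeasure μ] {X : Ω → ℝ} (hX : Measurable X) {c : ℝ} (hc : 0 < c)
    (hsurv : ∀ r, 0 ≤ r → μ {ω | r ≤ X ω} = ENNReal.ofReal (exp (-(c * r ^ 2)))) :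
    μ.map X = (volume.restrict (Ioi 0)).withDensity
      fun u => ENNReal.ofReal (2 * c * u * exp (-(c * u ^ 2))) := by
  have : IsProbabilityMeasure (μ.map X) := Measure.isProbabilityMeasure_map hX.aemeasurable
  refine Measure.ext_of_Ici _ _ fun r => ?_
  rw [Measure.map_apply hX measurableSet_Ici, withDensity_apply _ measurableSet_Ici,
    Measure.restrict_restrict measurableSet_Ici]
  rcases le_or_gt r 0 with hr | hr
  · have hpre : μ (X ⁻¹' Ici r) = 1 := by
      refine le_antisymm prob_le_one ?_
      calc 1 = μ {ω | 0 ≤ X ω} := by simp [hsurv 0 le_rfl]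
        _ ≤ μ (X ⁻¹' Ici r) := measure_mono fun ω hω => hr.trans hω
    rw [hpre, inter_eq_right.2 (Ioi_subset_Ici hr), lintegral_Ioi_mul_exp_neg_mul_sq hc le_rfl]
    simp
  · rw [inter_eq_left.2 (Ici_subset_Ioi.2 hr), setLIntegral_congr Ioi_ae_eq_Ici.symm,
      lintegral_Ioi_mul_exp_neg_mul_sq hc hr.le]
    exact hsurv r hr.le

end RayleighLaw

section Competition

open Set Real

variable {Ω ι : Type*} [MeasurableSpace Ω] {μ : Measure Ω}

theorem measure_prodMk_mem_eq_lintegral {E F : Type*} [MeasurableSpace E] [MeasurableSpace F]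
    [IsFiniteMeasure μ] {X : Ω → E} {Y : Ω → F} (hX : Measurable X) (hY : Measurable Y)
    (hXY : IndepFun X Y μ) {S : Set (E × F)} (hS : MeasurableSet S) :
    μ {ω | (X ω, Y ω) ∈ S} = ∫⁻ x, μ {ω | (x, Y ω) ∈ S} ∂μ.map X := by
  calc μ {ω | (X ω, Y ω) ∈ S} = (μ.map fun ω => (X ω, Y ω)) S :=
        (Measure.map_apply (hX.prodMk hY) hS).symm
    _ = ∫⁻ x, μ.map Y (Prod.mk x ⁻¹' S) ∂μ.map X := by
      rw [hXY.map_prod_eq_prod_map_map hX.aemeasurable hY.aemeasurable, Measure.prod_apply hS]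
    _ = ∫⁻ x, μ {ω | (x, Y ω) ∈ S} ∂μ.map X :=
      lintegral_congr fun x => Measure.map_apply hY (measurable_prodMk_left hS)

theorem measure_forall_prodMk_mem_eq_setLIntegral_prod {E : ι → Type*}
    [∀ i, MeasurableSpace (E i)] {X : ∀ i, Ω → E i} (hX : ∀ i, Measurable (X i))
    (hindep : iIndepFun X μ) {k : ι} {T : Finset ι} (hkT : k ∉ T) {B : Set (E k)}
    (hB : MeasurableSet B) {S : ∀ i, Set (E k × E i)} (hS : ∀ i, MeasurableSet (S i)) :
    μ {ω | X k ω ∈ B ∧ ∀ i ∈ T, (X k ω, X i ω) ∈ S i} =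
      ∫⁻ x in B, ∏ i ∈ T, μ {ω | (x, X i ω) ∈ S i} ∂μ.map (X k) := by
  have := hindep.isProbabilityMeasure
  have hXT : Measurable fun ω (i : T) => X i ω := measurable_pi_lambda _ fun i => hX i
  have hindepT : IndepFun (X k) (fun ω (i : T) => X i ω) μ :=
    (hindep.indepFun_finset {k} T (Finset.disjoint_singleton_left.2 hkT) hX).comp
      (measurable_pi_apply (⟨k, Finset.mem_singleton_self k⟩ : ({k} : Finset ι))) measurable_id
  let W : Set (E k × ∀ i : T, E i) := {p | p.1 ∈ B} ∩ ⋂ i : T, {p | (p.1, p.2 i) ∈ S i}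
  have hW : MeasurableSet W := (measurable_fst hB).inter <| MeasurableSet.iInter fun i =>
    measurable_fst.prodMk ((measurable_pi_apply i).comp measurable_snd) (hS i)
  have hsection (x : E k) : μ {ω | (x, fun i : T => X i ω) ∈ W} =
      B.indicator (fun x => ∏ i ∈ T, μ {ω | (x, X i ω) ∈ S i}) x := by
    by_cases hx : x ∈ B
    · have hset : {ω | (x, fun i : T => X i ω) ∈ W} = ⋂ i ∈ T, X i ⁻¹' (Prod.mk x ⁻¹' S i) := by
        ext ω
        simp [W, hx]
      rw [indicator_of_mem hx, hset, hindep.measure_inter_preimage_eq_mul T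
        fun i _ => measurable_prodMk_left (hS i)]
      rfl
    · simp [W, hx]
  calc μ {ω | X k ω ∈ B ∧ ∀ i ∈ T, (X k ω, X i ω) ∈ S i}
      = μ {ω | (X k ω, fun i : T => X i ω) ∈ W} := by simp [W]
    _ = ∫⁻ x, B.indicator (fun x => ∏ i ∈ T, μ {ω | (x, X i ω) ∈ S i}) x ∂μ.map (X k) := by
      rw [measure_prodMk_mem_eq_lintegral (hX k) hXT hindepT hW, lintegral_congr hsection]
    _ = ∫⁻ x in B, ∏ i ∈ T, μ {ω | (x, X i ω) ∈ S i} ∂μ.map (X k) := lintegral_indicator hB _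

/-- The joint density, at distance `u`, of the event that the nearest station of tier `k` lies at
distance `u` and that the nearest station of each tier `i ∈ T` is no closer than `q i u`, for
independent planar Poisson processes of intensities `lam`. It is not normalized: its total mass is
the probability that tier `k` wins the association against `T`. -/
noncomputable def associationDensity (lam : ι → ℝ) (q : ι → ℝ → ℝ) (k : ι) (T : Finset ι)
    (u : ℝ) : ℝ :=
  2 * π * lam k * (u * exp (-(π * (lam k * u ^ 2 + ∑ i ∈ T, lam i * q i u ^ 2))))

section

variable {lam : ι → ℝ} {q : ι → ℝ → ℝ} {k : ι} {T : Finset ι}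

theorem measurable_associationDensity (hq : ∀ i, Measurable (q i)) :
    Measurable (associationDensity lam q k T) := by
  have : Measurable fun u => ∑ i ∈ T, lam i * q i u ^ 2 :=
    Finset.measurable_fun_sum T fun i _ => ((hq i).pow_const 2).const_mul (lam i)
  unfold associationDensity
  fun_prop

theorem associationDensity_pos (hk : 0 < lam k) {u : ℝ} (hu : 0 < u) :
    0 < associationDensity lam q k T u := by
  unfold associationDensity
  positivity

theorem associationDensity_eq_mul_prod (u : ℝ) :
    associationDensity lam q k T u = 2 * (π * lam k) * u * exp (-(π * lam k * u ^ 2)) *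
      ∏ i ∈ T, exp (-(π * lam i * q i u ^ 2)) := by
  rw [← exp_sum, mul_assoc, ← exp_add, associationDensity, mul_add, Finset.mul_sum, neg_add,
    ← Finset.sum_neg_distrib]
  simp only [mul_assoc]

theorem associationDensity_map_univ_of_forall_eq_zero {n : ℕ} (σ : Fin n ↪ ι) {j : ℕ} {u : ℝ}
    (hzero : ∀ i : Fin n, j ≤ i → q (σ i) u = 0) :
    associationDensity lam q k (Finset.univ.map σ) u =
      2 * π * lam k * (u * exp (-(π * (lam k * u ^ 2 +
        ∑ i ∈ Finset.univ.filter (fun i : Fin n => (i : ℕ) < j),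
          lam (σ i) * q (σ i) u ^ 2)))) := by
  rw [associationDensity, Finset.sum_map, Finset.sum_filter_of_ne]
  intro i _ hi
  by_contra! hji
  exact hi (by simp [hzero i hji])

theorem measure_le_and_forall_threshold_le {R : ι → Ω → ℝ} (hR : ∀ i, Measurable (R i))
    (hindep : iIndepFun R μ) (hk : 0 < lam k)
    (hsurv : ∀ i r, 0 ≤ r → μ {ω | r ≤ R i ω} = ENNReal.ofReal (exp (-(π * lam i * r ^ 2))))
    (hkT : k ∉ T) (hq : ∀ i, Measurable (q i)) (hq0 : ∀ i u, 0 ≤ q i u) (s : ℝ) :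
    μ {ω | R k ω ≤ s ∧ ∀ i ∈ T, q i (R k ω) ≤ R i ω} =
      ∫⁻ u in Ioc 0 s, ENNReal.ofReal (associationDensity lam q k T u) := by
  have := hindep.isProbabilityMeasure
  have hS (i : ι) : MeasurableSet {p : ℝ × ℝ | q i p.1 ≤ p.2} :=
    measurableSet_le ((hq i).comp measurable_fst) measurable_snd
  have hvoid (u : ℝ) : ∏ i ∈ T, μ {ω | (u, R i ω) ∈ {p : ℝ × ℝ | q i p.1 ≤ p.2}} =
      ENNReal.ofReal (∏ i ∈ T, exp (-(π * lam i * q i u ^ 2))) := by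
    rw [ENNReal.ofReal_prod_of_nonneg fun i _ => (exp_pos _).le]
    exact Finset.prod_congr rfl fun i _ => hsurv i _ (hq0 i u)
  have hvoid_meas : Measurable fun u =>
      ENNReal.ofReal (∏ i ∈ T, exp (-(π * lam i * q i u ^ 2))) := by
    refine (Finset.measurable_fun_prod T fun i _ => ?_).ennreal_ofReal
    have := hq i
    fun_prop
  calc μ {ω | R k ω ≤ s ∧ ∀ i ∈ T, q i (R k ω) ≤ R i ω}
      = ∫⁻ u in Iic s, ENNReal.ofReal (∏ i ∈ T, exp (-(π * lam i * q i u ^ 2))) ∂μ.map (R k) := by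
        simp only [← hvoid]
        exact measure_forall_prodMk_mem_eq_setLIntegral_prod hR hindep hkT measurableSet_Iic hS
    _ = ∫⁻ u in Ioc 0 s, ENNReal.ofReal (2 * (π * lam k) * u * exp (-(π * lam k * u ^ 2))) *
          ENNReal.ofReal (∏ i ∈ T, exp (-(π * lam i * q i u ^ 2))) := by
        rw [map_eq_withDensity_of_measure_ge_eq_exp_neg_mul_sq (hR k) (mul_pos pi_pos hk)
            (hsurv k), restrict_withDensity measurableSet_Iic,
          lintegral_withDensity_eq_lintegral_mul _ (by fun_prop) hvoid_meas,
          Measure.restrict_restrict measurableSet_Iic, inter_comm, Ioi_inter_Iic]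
        rfl
    _ = ∫⁻ u in Ioc 0 s, ENNReal.ofReal (associationDensity lam q k T u) := by
        refine setLIntegral_congr_fun measurableSet_Ioc fun u hu => ?_
        have : 0 ≤ 2 * (π * lam k) * u * exp (-(π * lam k * u ^ 2)) := by
          have := hu.1
          positivity
        rw [associationDensity_eq_mul_prod, ENNReal.ofReal_mul this]

end

theorem exists_toReal_measure_mul_eq [IsFiniteMeasure μ] {X : Ω → ℝ} {A : Ω → Prop} {f : ℝ → ℝ}
    (hf : Measurable f) (hpos : ∀ u, 0 < u → 0 < f u)
    (hXA : ∀ s, μ {ω | X ω ≤ s ∧ A ω} = ∫⁻ u in Ioc 0 s, ENNReal.ofReal (f u)) :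
    ∃ φ : ℝ → ℝ, (∀ u, (μ {ω | A ω}).toReal * φ u = f u) ∧
      ∀ s, (μ {ω | X ω ≤ s ∧ A ω}).toReal =
        ∫ u in Ioc 0 s, (μ {ω | A ω}).toReal * φ u := by
  have hA : 0 < μ {ω | A ω} := by
    have hsub : {ω | X ω ≤ 1 ∧ A ω} ⊆ {ω | A ω} := fun ω hω => hω.2
    have hsupp : Ioc 0 1 ⊆ (Function.support fun u => ENNReal.ofReal (f u)) ∩ Ioc 0 1 :=
      fun u hu => ⟨(ENNReal.ofReal_pos.2 (hpos u hu.1)).ne', hu⟩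
    refine lt_of_lt_of_le ?_ (measure_mono hsub)
    rw [hXA 1, setLIntegral_pos_iff hf.ennreal_ofReal]
    exact lt_of_lt_of_le (by simp) (measure_mono hsupp)
  have hmul (u : ℝ) : (μ {ω | A ω}).toReal * (f u / (μ {ω | A ω}).toReal) = f u :=
    mul_div_cancel₀ _ (ENNReal.toReal_pos hA.ne' (measure_ne_top _ _)).ne'
  refine ⟨fun u => f u / (μ {ω | A ω}).toReal, hmul, fun s => ?_⟩
  simp only [hmul, hXA]
  refine (integral_eq_lintegral_of_nonneg_ae ?_ hf.aestronglyMeasurable).symm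
  exact ae_restrict_of_forall_mem measurableSet_Ioc fun u hu => (hpos u hu.1).le

theorem exists_conditional_density_of_thresholds {lam : ι → ℝ} {Q : ι → ℝ → ℝ} {k : ι}
    {T : Finset ι} {R : ι → Ω → ℝ} (hR : ∀ i, Measurable (R i)) (hindep : iIndepFun R μ)
    (hR0 : ∀ ω, 0 ≤ R k ω) (hk : 0 < lam k)
    (hsurv : ∀ i r, 0 ≤ r → μ {ω | r ≤ R i ω} = ENNReal.ofReal (exp (-(π * lam i * r ^ 2))))
    (hkT : k ∉ T) (hQ : ∀ i, MonotoneOn (Q i) (Ici 0)) (hQ0 : ∀ i u, 0 ≤ u → 0 ≤ Q i u) :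
    ∃ φ : ℝ → ℝ,
      (∀ u, 0 ≤ u → (μ {ω | ∀ i ∈ T, Q i (R k ω) ≤ R i ω}).toReal * φ u =
        associationDensity lam Q k T u) ∧
      ∀ s, (μ {ω | R k ω ≤ s ∧ ∀ i ∈ T, Q i (R k ω) ≤ R i ω}).toReal =
        ∫ u in Ioc 0 s, (μ {ω | ∀ i ∈ T, Q i (R k ω) ≤ R i ω}).toReal * φ u := by
  have := hindep.isProbabilityMeasure
  -- `Q` is only controlled on `[0, ∞)`; its truncation `q` is monotone on the whole line.
  let q : ι → ℝ → ℝ := fun i u => Q i (max u 0)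
  have hq (i : ι) : Measurable (q i) := Monotone.measurable fun u v huv =>
    hQ i (le_max_right u 0) (le_max_right v 0) (max_le_max_right 0 huv)
  have hqQ (i : ι) (ω : Ω) : q i (R k ω) = Q i (R k ω) := by simp only [q, max_eq_left (hR0 ω)]
  obtain ⟨φ, hφ, hdist⟩ := exists_toReal_measure_mul_eq
    (measurable_associationDensity hq) (fun u hu => associationDensity_pos hk hu)
    (measure_le_and_forall_threshold_le hR hindep hk hsurv hkT hq
      fun i u => hQ0 i _ (le_max_right u 0))
  simp only [hqQ] at hφ hdist
  refine ⟨φ, fun u hu => ?_, hdist⟩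
  simp only [hφ, associationDensity, q, max_eq_left hu]

theorem exists_conditional_density_of_association {lam w : ι → ℝ} (hw : ∀ i, 0 < w i)
    {G Ginv : ι → ℝ → ℝ} (hinv : ∀ i, IsLowerInverse (G i) (Ginv i)) {k : ι}
    (hGanti : AntitoneOn (G k) (Ici 0)) (hGpos : ∀ u, 0 ≤ u → 0 < G k u) {T : Finset ι}
    {R : ι → Ω → ℝ} (hR : ∀ i, Measurable (R i)) (hindep : iIndepFun R μ) (hR0 : ∀ i ω, 0 ≤ R i ω)
    (hk : 0 < lam k)
    (hsurv : ∀ i r, 0 ≤ r → μ {ω | r ≤ R i ω} = ENNReal.ofReal (exp (-(π * lam i * r ^ 2))))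
    (hkT : k ∉ T) :
    ∃ φ : ℝ → ℝ,
      (∀ u, 0 ≤ u →
        (μ {ω | ∀ i ∈ T, w i * G i (R i ω) ≤ w k * G k (R k ω)}).toReal * φ u =
          associationDensity lam (fun i u => Ginv i (w k / w i * G k u)) k T u) ∧
      ∀ s, (μ {ω | R k ω ≤ s ∧ ∀ i ∈ T, w i * G i (R i ω) ≤ w k * G k (R k ω)}).toReal =
        ∫ u in Ioc 0 s,
          (μ {ω | ∀ i ∈ T, w i * G i (R i ω) ≤ w k * G k (R k ω)}).toReal * φ u := by
  have hthreshold (i : ι) (ω : Ω) : w i * G i (R i ω) ≤ w k * G k (R k ω) ↔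
      Ginv i (w k / w i * G k (R k ω)) ≤ R i ω :=
    ((hinv i).apply_div_mul_le_iff (hw k) (hw i) (hGpos _ (hR0 k ω)) (hR0 i ω)).symm
  simp only [hthreshold]
  exact exists_conditional_density_of_thresholds hR hindep (hR0 k) hk hsurv hkT
    (fun i => (hinv i).monotoneOn_comp_const_mul hGanti hGpos (div_pos (hw k) (hw i)))
    fun i u hu => (hinv i).nonneg (mul_pos (div_pos (hw k) (hw i)) (hGpos u hu))

end Competition

theorem map_univ_eq_univ_erase {κ ι : Type*} [Fintype κ] [Fintype ι] [DecidableEq ι] (σ : κ ↪ ι)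
    {k : ι} (hσk : ∀ j, σ j ≠ k) (hcard : Fintype.card κ = Fintype.card ι - 1) :
    Finset.univ.map σ = Finset.univ.erase k := by
  refine Finset.eq_of_subset_of_card_le (fun i hi => ?_) ?_
  · obtain ⟨j, -, rfl⟩ := Finset.mem_map.1 hi
    exact Finset.mem_erase.2 ⟨hσk j, Finset.mem_univ _⟩
  · rw [Finset.card_map, Finset.card_erase_of_mem (Finset.mem_univ k), Finset.card_univ,
      Finset.card_univ, hcard]

theorem barss_conditional_connection_distance_homogeneous_general
    {Ω : Type*} [MeasurableSpace Ω] {μ : Measure Ω}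
    {K : ℕ} {k : Fin K} {β P lam : Fin K → ℝ}
    (hβ : ∀ i, 0 < β i) (hP : ∀ i, 0 < P i) (hlam : ∀ i, 0 < lam i)
    {G : Fin K → ℝ → ℝ}
    (hGcont : ∀ i, ContinuousOn (G i) (Set.Ici 0)) (hGanti : ∀ i, AntitoneOn (G i) (Set.Ici 0))
    (hGpos : ∀ i x, 0 ≤ x → 0 < G i x)
    (hGlim : ∀ i, Filter.Tendsto (G i) Filter.atTop (nhds 0))
    {Ginv : Fin K → ℝ → ℝ}
    (hGinv1 : ∀ i y, 0 < y → y ≤ G i 0 → Ginv i y = sInf {x : ℝ | 0 ≤ x ∧ G i x = y})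
    (hGinv2 : ∀ i y, G i 0 < y → Ginv i y = 0)
    {Q : Fin K → ℝ → ℝ} (hQ : ∀ i u, Q i u = Ginv i (β k * P k / (β i * P i) * G k u))
    {R : Fin K → Ω → ℝ} (hRmeas : ∀ i, Measurable (R i)) (hRnn : ∀ i ω, 0 ≤ R i ω)
    (hRindep : iIndepFun R μ)
    (hsurv : ∀ i r, 0 ≤ r →
      μ {ω | r ≤ R i ω} = ENNReal.ofReal (Real.exp (-(Real.pi * lam i * r ^ 2))))
    {a : Fin K → ℝ} (ha : ∀ i, a i = β i * P i / (β k * P k) * G i 0)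
    {σ : Fin (K - 1) → Fin K} (hσinj : Function.Injective σ) (hσk : ∀ j, σ j ≠ k)
    (hσdesc : Antitone (a ∘ σ))
    {r : ℕ → ℝ} (hr0 : r 0 = 0) (hrsucc : ∀ j : Fin (K - 1), r (j + 1) = Ginv k (a (σ j)))
    {F : ℕ → ℝ → ℝ}
    (hF : ∀ j u, F j u = u * Real.exp (-(Real.pi * (lam k * u ^ 2 +
      ∑ i ∈ Finset.univ.filter (fun i : Fin (K - 1) => (i : ℕ) < j),
        lam (σ i) * (Q (σ i) u) ^ 2))))
    {pk : ℝ} (hpk : pk = (μ {ω | ∀ i, i ≠ k →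
      β i * P i * G i (R i ω) ≤ β k * P k * G k (R k ω)}).toReal) :
    ∃ fk : ℝ → ℝ,
      (∀ s, 0 ≤ s →
        (μ {ω | R k ω ≤ s ∧
            ∀ i, i ≠ k → β i * P i * G i (R i ω) ≤ β k * P k * G k (R k ω)}).toReal =
          ∫ u in Set.Ioc 0 s, pk * fk u) ∧
      (∀ j ∈ Finset.range (K - 1), ∀ u ∈ Set.Ico (r j) (r (j + 1)),
        pk * fk u = 2 * Real.pi * lam k * F j u) ∧
      (∀ u, r (K - 1) ≤ u → pk * fk u = 2 * Real.pi * lam k * F (K - 1) u) := by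
  have hw (i : Fin K) : 0 < β i * P i := mul_pos (hβ i) (hP i)
  have hinv (i : Fin K) : IsLowerInverse (G i) (Ginv i) :=
    isLowerInverse_of_eq_sInf (hGcont i) (hGanti i) (hGlim i) (hGinv1 i) (hGinv2 i)
  have ha0 (i : Fin K) : 0 < a i := ha i ▸ mul_pos (div_pos (hw i) (hw k)) (hGpos i 0 le_rfl)
  have hr : ∀ j ≤ K - 1, 0 ≤ r j
    | 0, _ => hr0.ge
    | j + 1, hj => hrsucc ⟨j, hj⟩ ▸ (hinv k).nonneg (ha0 _)
  let e : Fin (K - 1) ↪ Fin K := ⟨σ, hσinj⟩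
  have hne (i : Fin K) : i ≠ k ↔ i ∈ Finset.univ.map e := by
    simp [map_univ_eq_univ_erase e hσk]
  obtain ⟨fk, hfk, hdist⟩ := exists_conditional_density_of_association hw hinv (hGanti k)
    (hGpos k) hRmeas hRindep hRnn (hlam k) hsurv (fun hk => (hne k).2 hk rfl)
  simp only [← hne, ← hpk, ← hQ] at hfk hdist
  have hpiece {j : ℕ} {u : ℝ} (hu : 0 ≤ u) (hzero : ∀ i : Fin (K - 1), j ≤ i → Q (σ i) u = 0) :
      pk * fk u = 2 * Real.pi * lam k * F j u := by
    rw [hfk u hu, hF]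
    exact associationDensity_map_univ_of_forall_eq_zero e hzero
  refine ⟨fk, fun s _ => hdist s, fun j hj u hu => ?_, fun u hu => ?_⟩
  · have hjK : j < K - 1 := Finset.mem_range.1 hj
    have hu0 : 0 ≤ u := (hr j hjK.le).trans hu.1
    refine hpiece hu0 fun i hji => ?_
    have hai : β (σ i) * P (σ i) / (β k * P k) * G (σ i) 0 ≤ a (σ ⟨j, hjK⟩) :=
      ha (σ i) ▸ hσdesc (show (⟨j, hjK⟩ : Fin (K - 1)) ≤ i from hji)
    rw [hQ]
    exact (hinv (σ i)).apply_div_mul_eq_zero (hinv k) (hw k) (hw (σ i)) (ha0 _) hai hu0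
      (hrsucc ⟨j, hjK⟩ ▸ hu.2)
  · exact hpiece ((hr _ le_rfl).trans hu) fun i hi => absurd i.isLt hi.not_gt

/-- Lemma 8: in the homogeneous BARSS setup with strictly decreasing path-loss
functions, the conditional density `f_k` of the connection distance given
association with tier `k` satisfies the piecewise formula over the segments
`[r_{j−1}, r_j)` of the descending threshold enumeration `σ` (last segment
extending to `+∞`); "conditional density" means
`P(R_k ≤ r ∧ A* = k) = ∫₀^r p_k* f_k(u) du` for all `r ≥ 0`. -/
theorem barss_conditional_connection_distance_homogeneous
    {Ω : Type*} [MeasureSpace Ω] [IsProbabilityMeasure (ℙ : Measure Ω)]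
    (K : ℕ) (hK : 2 ≤ K) (k : Fin K)
    (β P lam : Fin K → ℝ)
    (hβ : ∀ i, 0 < β i) (hP : ∀ i, 0 < P i) (hlam : ∀ i, 0 < lam i)
    (G : Fin K → ℝ → ℝ)
    (hGcont : ∀ i, ContinuousOn (G i) (Set.Ici 0))
    (hGanti : ∀ i, ∀ x y : ℝ, 0 ≤ x → x ≤ y → G i y ≤ G i x)
    (hGstrict : ∀ i, ∀ x y : ℝ, 0 ≤ x → x < y → G i y < G i x)
    (hGpos : ∀ i, ∀ x : ℝ, 0 ≤ x → 0 < G i x)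
    (hGlim : ∀ i, Filter.Tendsto (G i) Filter.atTop (nhds 0))
    (Ginv : Fin K → ℝ → ℝ)
    (hGinv1 : ∀ i, ∀ y : ℝ, 0 < y → y ≤ G i 0 →
      Ginv i y = sInf {x : ℝ | 0 ≤ x ∧ G i x = y})
    (hGinv2 : ∀ i, ∀ y : ℝ, G i 0 < y → Ginv i y = 0)
    (Q : Fin K → ℝ → ℝ)
    (hQ : ∀ i u, Q i u = Ginv i (β k * P k / (β i * P i) * G k u))
    (R : Fin K → Ω → ℝ)
    (hRmeas : ∀ i, Measurable (R i)) (hRnn : ∀ i ω, 0 ≤ R i ω)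
    (hRindep : iIndepFun R ℙ)
    (hsurv : ∀ i, ∀ r : ℝ, 0 ≤ r →
      ℙ {ω | r ≤ R i ω} = ENNReal.ofReal (Real.exp (-(Real.pi * lam i * r ^ 2))))
    (a : Fin K → ℝ) (ha : ∀ i, a i = β i * P i / (β k * P k) * G i 0)
    (σ : Fin (K - 1) → Fin K)
    (hσinj : Function.Injective σ) (hσk : ∀ j, σ j ≠ k)
    (hσdesc : ∀ i j : Fin (K - 1), i ≤ j → a (σ j) ≤ a (σ i))
    (r : ℕ → ℝ) (hr0 : r 0 = 0)
    (hrsucc : ∀ j : Fin (K - 1), r ((j : ℕ) + 1) = Ginv k (a (σ j)))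
    (F : ℕ → ℝ → ℝ)
    (hF : ∀ (j : ℕ) (u : ℝ), F j u =
      u * Real.exp (-(Real.pi * (lam k * u ^ 2 +
        ∑ i ∈ Finset.univ.filter (fun i : Fin (K - 1) => (i : ℕ) < j),
          lam (σ i) * (Q (σ i) u) ^ 2))))
    (pk : ℝ)
    (hpk : pk = (ℙ {ω | ∀ i, i ≠ k →
      β i * P i * G i (R i ω) ≤ β k * P k * G k (R k ω)}).toReal) :
    ∃ fk : ℝ → ℝ,
      (∀ s : ℝ, 0 ≤ s →
        (ℙ {ω | R k ω ≤ s ∧ ∀ i, i ≠ k →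
            β i * P i * G i (R i ω) ≤ β k * P k * G k (R k ω)}).toReal =
          ∫ u in Set.Ioc (0 : ℝ) s, pk * fk u) ∧
      (∀ j ∈ Finset.range (K - 1), ∀ u ∈ Set.Ico (r j) (r (j + 1)),
        pk * fk u = 2 * Real.pi * lam k * F j u) ∧
      (∀ u : ℝ, r (K - 1) ≤ u → pk * fk u = 2 * Real.pi * lam k * F (K - 1) u) :=
  barss_conditional_connection_distance_homogeneous_general hβ hP hlam hGcont
    (fun i x hx y _ hxy => hGanti i x y hx hxy) hGpos hGlim hGinv1 hGinv2 hQ hRmeas hRnn hRindep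
    hsurv ha hσinj hσk (fun i j hij => hσdesc i j hij) hr0 hrsucc hF hpk
end
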